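/- Let 𝓖 = {(X_i, u_i, 𝓕_i, q_i) : i ∈ I} be a Bayesian game over a complete finite probability space (Ω,𝓕,μ) with common information (𝓕_i = 𝓕 for all i, 𝓕 generated by a measurable partition of Ω, and each cell E(ω) satisfying ∫_{E(ω)} q_i dμ > 0), and assume each u_i is jointly measurable and integrably bounded so that the conditional expected utilities h_i are well-defined. Suppose for each i ∈ I: (1) X_i is a nonempty, compact, convex subset of a separable Banach space Y; (2) for each ω ∈ Ω and x_{-i} ∈ X_{-i}, the function x_i ↦ u_i(ω, x_i, x_{-i}) is concave on X_i; (3) the correspondence Q_i^{u_i} satisfies the continuous inclusion property if μ is atomic and the strong continuous inclusion property otherwise; and (4) either Y is finite-dimensional or 𝕂(Q_i^{u_i})(ω,x) ≠ ∅ for all (ω,x) ∈ U_{Q_i^{u_i}}. Then 𝓖 has a Bayesian equilibrium. -/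

import Mathlib

open MeasureTheory Set TopologicalSpace

noncomputable section

/-- A correspondence `Φ : Z → 2^Y` is lower-semicontinuous if `{x | Φ x ∩ V ≠ ∅}` is open
for every open `V ⊆ Y`. -/
def LSCCorr {Z Y : Type*} [TopologicalSpace Z] [TopologicalSpace Y] (Φ : Z → Set Y) : Prop :=
  ∀ V : Set Y, IsOpen V → IsOpen {x : Z | (Φ x ∩ V).Nonempty}

/-- Lower semicontinuity of the restriction of a correspondence to a subset `O`
(with the subspace topology). -/
def LSCCorrOn {Z Y : Type*} [TopologicalSpace Z] [TopologicalSpace Y] (Φ : Z → Set Y)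
    (O : Set Z) : Prop :=
  ∀ V : Set Y, IsOpen V → IsOpen {x : O | (Φ (x : Z) ∩ V).Nonempty}

/-- A correspondence `Φ : Z → 2^Y` is upper-semicontinuous if `{x | Φ x ⊆ V}` is open
for every open `V ⊆ Y`. -/
def USCCorr {Z Y : Type*} [TopologicalSpace Z] [TopologicalSpace Y] (Φ : Z → Set Y) : Prop :=
  ∀ V : Set Y, IsOpen V → IsOpen {x : Z | Φ x ⊆ V}

/-- A correspondence `Φ : T → 2^Y` is lower measurable if `{t | Φ t ∩ V ≠ ∅}` is measurable
for every open `V ⊆ Y`. -/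
def LowerMeasCorr {T Y : Type*} [MeasurableSpace T] [TopologicalSpace Y] (Φ : T → Set Y) : Prop :=
  ∀ V : Set Y, IsOpen V → MeasurableSet {t : T | (Φ t ∩ V).Nonempty}

/-- A correspondence `Φ : T × Z → 2^Y` is jointly lower measurable if
`{(t,x) | Φ t x ∩ V ≠ ∅}` is product-measurable for every open `V ⊆ Y`. -/
def JLowerMeas {T Z Y : Type*} [MeasurableSpace T] [MeasurableSpace Z] [TopologicalSpace Y]
    (Φ : T → Z → Set Y) : Prop :=
  ∀ V : Set Y, IsOpen V → MeasurableSet {p : T × Z | (Φ p.1 p.2 ∩ V).Nonempty}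

/-- `F, O` witness the continuous inclusion property for `Ψ`. -/
def CIPWitness {T Z Y : Type*} [MeasurableSpace T] [TopologicalSpace Z]
    [NormedAddCommGroup Y] [NormedSpace ℝ Y]
    (Ψ : T → Z → Set Y) (F : Z → T → Z → Set Y) (O : Z → T → Set Z) : Prop :=
  (∀ z t, (Ψ t z).Nonempty →
      IsOpen (O z t) ∧ z ∈ O z t ∧ ∀ x ∈ O z t, (F z t x).Nonempty ∧ F z t x ⊆ Ψ t x) ∧
  (∀ z t, (Ψ t z).Nonempty → LSCCorrOn (fun x => convexHull ℝ (F z t x)) (O z t)) ∧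
  (∀ z t, ¬(Ψ t z).Nonempty → LSCCorr fun x => convexHull ℝ (F z t x))

/-- The continuous inclusion property. -/
def ContinuousInclusion {T Z Y : Type*} [MeasurableSpace T] [TopologicalSpace Z]
    [NormedAddCommGroup Y] [NormedSpace ℝ Y] (Ψ : T → Z → Set Y) : Prop :=
  ∃ F O, CIPWitness Ψ F O

/-- `F, O` witness the strong continuous inclusion property for `Ψ`. -/
def SCIPWitness {T Z Y : Type*} [MeasurableSpace T] [TopologicalSpace Z] [MeasurableSpace Z]
    [NormedAddCommGroup Y] [NormedSpace ℝ Y]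
    (Ψ : T → Z → Set Y) (F : Z → T → Z → Set Y) (O : Z → T → Set Z) : Prop :=
  CIPWitness Ψ F O ∧
  (∀ z, JLowerMeas fun t x => convexHull ℝ (F z t x)) ∧
  ((∀ y z, F y = F z) ∨
    ((Set.range F).Countable ∧
      {s : Set Z | ∃ t z, (Ψ t z).Nonempty ∧ s = O z t}.Countable ∧
      ∀ z, MeasurableSet {p : T × Z | p.2 ∈ O z p.1}) ∨
    (MeasurableSet {p : T × Z | (Ψ p.1 p.2).Nonempty} ∧
      JLowerMeas (fun t x => {z : Z | (Ψ t z).Nonempty ∧ x ∈ O z t}) ∧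
      (∀ t x, {z : Z | (Ψ t z).Nonempty ∧ x ∈ O z t}.Finite) ∧
      ∀ t x, ∃ B : Set Y, IsCompact B ∧
        LSCCorr (fun z => convexHull ℝ (F z t x)) ∧
        USCCorr (fun z => convexHull ℝ (F z t x)) ∧
        ∀ z, convexHull ℝ (F z t x) ⊆ B))

/-- The strong continuous inclusion property. -/
def StrongContinuousInclusion {T Z Y : Type*} [MeasurableSpace T] [TopologicalSpace Z]
    [MeasurableSpace Z] [NormedAddCommGroup Y] [NormedSpace ℝ Y] (Ψ : T → Z → Set Y) : Prop :=
  ∃ F O, SCIPWitness Ψ F O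

/-- The operator `𝕂(Ψ)(t,x) = ⋃ {int F_z(t,x) : Ψ(t,z) ≠ ∅ and x ∈ O_z^t}`. -/
def Kmap {T Z Y : Type*} [TopologicalSpace Y]
    (Ψ : T → Z → Set Y) (F : Z → T → Z → Set Y) (O : Z → T → Set Z)
    (t : T) (x : Z) : Set Y :=
  ⋃ z ∈ {z : Z | (Ψ t z).Nonempty ∧ x ∈ O z t}, interior (F z t x)

/-- `A` is an atom of the measure `μ`. -/
def IsMeasAtom {T : Type*} [MeasurableSpace T] (μ : Measure T) (A : Set T) : Prop :=
  MeasurableSet A ∧ μ A ≠ 0 ∧ ∀ B ⊆ A, MeasurableSet B → μ B = 0 ∨ μ (A \ B) = 0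

/-- The measure space is (purely) atomic: it is the union of countably many atoms. -/
def IsAtomicMeasure {T : Type*} [MeasurableSpace T] (μ : Measure T) : Prop :=
  ∃ S : Set (Set T), S.Countable ∧ (∀ A ∈ S, IsMeasAtom μ A) ∧ ⋃₀ S = Set.univ

/-- `ψ` is a Carathéodory-type selection of `Ψ` on `U_Ψ`: it selects from `Ψ` on `U_Ψ`,
is measurable in `t` on each section `U_Ψ^x` and continuous in `x` on each section `U_Ψ^t`. -/
def CaraSelection {T Z Y : Type*} [MeasurableSpace T] [TopologicalSpace Z]
    [TopologicalSpace Y] [MeasurableSpace Y]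
    (Ψ : T → Z → Set Y) (ψ : T → Z → Y) : Prop :=
  (∀ t x, (Ψ t x).Nonempty → ψ t x ∈ Ψ t x) ∧
  (∀ x : Z, Measurable fun t : {t : T // (Ψ t x).Nonempty} => ψ t.1 x) ∧
  (∀ t : T, Continuous fun x : {x : Z // (Ψ t x).Nonempty} => ψ t x.1)

/-- The preference correspondence induced by a family of payoff functions:
`y ∈ PrefCorr X v i ω x` iff `y ∈ Xᵢ` and `v i (ω, (y, x₋ᵢ)) − v i (ω, x) > 0`.
With `v = h` (the conditional expected utilities) this is the correspondence `Qᵢ^{uᵢ}`. -/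
def PrefCorr {Ω Y I : Type*} [DecidableEq I] (X : I → Set Y)
    (v : (i : I) → Ω → ((j : I) → X j) → ℝ) (i : I) (ω : Ω) (x : (j : I) → X j) : Set Y :=
  {y : Y | ∃ hy : y ∈ X i, 0 < v i ω (Function.update x i ⟨y, hy⟩) - v i ω x}

/-!
The conditional payoff of a player depends on the state only through its cell and is concave in the
player's own strategy, so in each state the preferred sets are convex and never contain the current
strategy, and it suffices to find, cell by cell, a profile at which all of them are empty.

If `Y` is finite-dimensional, Michael's theorem turns the local inclusions into local continuous
selections, which a partition of unity glues to a selection `g i` on the open set where player `i`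
wants to deviate. Moving from `x i` towards `g i x` by a fraction that vanishes exactly off that set
is a continuous self-map of the product of the strategy sets. At a fixed point nobody deviates, as
otherwise `x i = g i x` would be preferred to itself. Its existence is Tychonoff's extension of
Brouwer's theorem, and the latter follows from Scarf's combinatorial lemma.

If `Y` is infinite-dimensional, compact strategy sets have empty interior, so condition (4) leaves
no room for a nonempty preferred set and every profile will do.
-/

section Scarf

theorem exists_injOn_diff_of_card_eq_succ {A B : Type*} [DecidableEq A] {s : Finset A}
    {t : Finset B} {f : A → B} (hf : MapsTo f s t) (hsurj : SurjOn f s t)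
    (hcard : s.card = t.card + 1) :
    ∃ a ∈ s, ∃ b ∈ s, a ≠ b ∧ f a = f b ∧
      InjOn f (s.erase a : Finset A) ∧ InjOn f (s.erase b : Finset A) := by
  obtain ⟨a, ha, b, hb, hab, hfab⟩ :=
    Finset.exists_ne_map_eq_of_card_lt_of_maps_to (by omega) hf
  have injOn_erase : ∀ a ∈ s, ∀ b ∈ s, a ≠ b → f a = f b → InjOn f (s.erase a : Finset A) := by
    intro a ha b hb hab hfab
    refine Finset.injOn_of_surjOn_of_card_le f (hf.mono_left (by simp)) ?_
      (by rw [Finset.card_erase_of_mem ha]; omega)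
    intro c hc
    obtain ⟨x, hx, rfl⟩ := hsurj hc
    rcases eq_or_ne x a with rfl | hxa
    · exact ⟨b, by simpa [hab.symm] using hb, hfab.symm⟩
    · exact ⟨x, by simpa [hxa] using hx, rfl⟩
  exact ⟨a, ha, b, hb, hab, hfab, injOn_erase a ha b hb hab hfab,
    injOn_erase b hb a ha hab.symm hfab.symm⟩

variable {I W α : Type*}

/-- A set with one element fewer than there are indices and with labels in every index other than
`i₀`: the doors of Scarf's path argument, the rooms being dominant sets with as many elements as
there are indices. -/
def IsDoor [Fintype I] (l : W → I) (i₀ : I) (G : Finset W) : Prop :=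
  G.card + 1 = Fintype.card I ∧ ∀ i, i ≠ i₀ → ∃ e ∈ G, l e = i

theorem isDoor_erase_of_label_eq [Fintype I] [DecidableEq W] {l : W → I} {i₀ : I} {E : Finset W}
    (hE : E.card = Fintype.card I) (hl : ∀ i, i ≠ i₀ → ∃ e ∈ E, l e = i) {a b : W} (ha : a ∈ E)
    (hb : b ∈ E) (hab : a ≠ b) (hlab : l a = l b) : IsDoor l i₀ (E.erase a) := by
  refine ⟨by rw [Finset.card_erase_add_one ha, hE], fun i hi => ?_⟩
  obtain ⟨e, he, rfl⟩ := hl i hi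
  rcases eq_or_ne e a with rfl | hea
  · exact ⟨b, by simp [hb, hab.symm], hlab.symm⟩
  · exact ⟨e, by simp [he, hea], rfl⟩

theorem subset_and_isDoor_iff [Fintype I] [DecidableEq W] {l : W → I} {i₀ : I} {E : Finset W}
    (hE : E.card = Fintype.card I) (hl : ∀ i, i ≠ i₀ → ∃ e ∈ E, l e = i)
    (hl₀ : ∀ e ∈ E, l e ≠ i₀) :
    ∃ a ∈ E, ∃ b ∈ E, a ≠ b ∧
      ∀ G, G ⊆ E ∧ IsDoor l i₀ G ↔ G = E.erase a ∨ G = E.erase b := by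
  classical
  obtain ⟨a, ha, b, hb, hab, hlab, hinj_a, hinj_b⟩ :=
    exists_injOn_diff_of_card_eq_succ (s := E) (t := Finset.univ.erase i₀) (f := l)
      (fun e he => by simpa using hl₀ e he) (fun i hi => hl i (by simpa using hi))
      (by rw [Finset.card_erase_add_one (Finset.mem_univ _), hE, Finset.card_univ])
  refine ⟨a, ha, b, hb, hab, fun G => ⟨?_, ?_⟩⟩
  · rintro ⟨hGE, hGcard, hGl⟩
    obtain ⟨c, hcG, rfl⟩ := Finset.exists_eq_insert_iff.2 ⟨hGE, hGcard.trans hE.symm⟩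
    obtain ⟨e, he, hec⟩ := hGl (l c) (hl₀ c (by simp))
    have hne : e ≠ c := ne_of_mem_of_not_mem he hcG
    by_contra! hcon
    have hca : c ≠ a := by rintro rfl; exact hcon.1 (Finset.erase_insert hcG).symm
    have hcb : c ≠ b := by rintro rfl; exact hcon.2 (Finset.erase_insert hcG).symm
    rcases eq_or_ne e a with rfl | hea
    · exact hne (hinj_b (by simp [he, hab]) (by simp [hcb]) hec)
    · exact hne (hinj_a (by simp [he, hea]) (by simp [hca]) hec)
  · rintro (rfl | rfl)
    · exact ⟨Finset.erase_subset _ _, isDoor_erase_of_label_eq hE hl ha hb hab hlab⟩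
    · exact ⟨Finset.erase_subset _ _, isDoor_erase_of_label_eq hE hl hb ha hab.symm hlab.symm⟩

open Classical in
theorem even_card_doors [Fintype I] (l : W → I) (i₀ : I) {E : Finset W}
    (hE : E.card = Fintype.card I) (hnot : ¬∀ i, ∃ e ∈ E, l e = i) :
    Even (E.powerset.filter (IsDoor l i₀)).card := by
  rcases (E.powerset.filter (IsDoor l i₀)).eq_empty_or_nonempty with hempty | ⟨G, hG⟩
  · simp [hempty]
  obtain ⟨hGE, -, hGl⟩ : G ⊆ E ∧ IsDoor l i₀ G := by simpa using hG
  have hl : ∀ i, i ≠ i₀ → ∃ e ∈ E, l e = i := fun i hi =>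
    (hGl i hi).imp fun e he => ⟨hGE he.1, he.2⟩
  have hl₀ : ∀ e ∈ E, l e ≠ i₀ := fun e he hel => hnot fun i =>
    (eq_or_ne i i₀).elim (fun hi => ⟨e, he, hel.trans hi.symm⟩) (hl i)
  obtain ⟨a, ha, b, hb, hab, hdoors⟩ := subset_and_isDoor_iff hE hl hl₀
  have hpair : E.powerset.filter (IsDoor l i₀) = {E.erase a, E.erase b} := by
    ext G
    simpa using hdoors G
  rw [hpair, Finset.card_pair fun h => hab (Finset.erase_injOn E ha hb h)]
  exact even_two

variable [LinearOrder α] {r : I → W → α} {s : I → W}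

/-- Dominance (primitivity) of the finite set `E` for the rankings `r` in Scarf's sense: no point
has, under every ranking, a point of `E` strictly below it. -/
def IsDominant (r : I → W → α) (E : Finset W) : Prop :=
  ∀ w, ∃ i, ∀ e ∈ E, r i w ≤ r i e

theorem IsDominant.mono {E G : Finset W} (hE : IsDominant r E) (hGE : G ⊆ E) : IsDominant r G :=
  fun w => (hE w).imp fun _ hi e he => hi e (hGE he)

/-- Strict rankings `r i` of `W`, one for each index, together with slack points `s i`: the
slack point `s i` is the worst point for `i`, and for `i` every other slack point is better
than all points that are not slack. -/
structure IsSlack (r : I → W → α) (s : I → W) : Prop where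
  rank_injective : ∀ i, Function.Injective (r i)
  slack_injective : Function.Injective s
  slack_le : ∀ i w, r i (s i) ≤ r i w
  lt_slack : ∀ {i j w}, i ≠ j → w ∉ range s → r i w < r i (s j)

/-- The points beating, for every index other than `p`, the selected point `m k`. -/
def beatingExcept (r : I → W → α) (m : I → W) (p : I) : Set W :=
  {w | ∀ k, k ≠ p → r k (m k) < r k w}

section Replacement

variable {G : Finset W} {m : I → W} {p : I} {t : W}

theorem exists_eq_of_isDominant (hr : ∀ i, Function.Injective (r i)) (hG : IsDominant r G)
    (hmG : ∀ i, m i ∈ G) (hm : ∀ i, IsMinOn (r i) G (m i)) {g : W} (hg : g ∈ G) :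
    ∃ k, m k = g := by
  obtain ⟨k, hk⟩ := hG g
  exact ⟨k, hr k (le_antisymm (hm k hg) (hk _ (hmG k)))⟩

theorem IsSlack.exists_isMaxOn_beatingExcept [Finite W] (hs : IsSlack r s)
    (hm : ∀ i, IsMinOn (r i) G (m i)) {g : W} (hg : g ∈ G) (hgs : g ∉ range s) (p : I) :
    ∃ t ∈ beatingExcept r m p, IsMaxOn (r p) (beatingExcept r m p) t :=
  exists_max_image _ _ (toFinite _) ⟨s p, fun k hkp => (hm k hg).trans_lt (hs.lt_slack hkp hgs)⟩

theorem notMem_of_mem_beatingExcept (hr : ∀ i, Function.Injective (r i)) (hG : IsDominant r G)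
    (hmG : ∀ i, m i ∈ G) (hm : ∀ i, IsMinOn (r i) G (m i)) (hp : ∃ k, k ≠ p ∧ m k = m p)
    (ht : t ∈ beatingExcept r m p) : t ∉ G := by
  intro htG
  obtain ⟨k, rfl⟩ := exists_eq_of_isDominant hr hG hmG hm htG
  rcases eq_or_ne k p with rfl | hkp
  · obtain ⟨j, hjp, hmj⟩ := hp
    exact (ht j hjp).ne (by rw [hmj])
  · exact (ht k hkp).false

theorem IsDominant.insert_of_isMaxOn [DecidableEq W] (hG : IsDominant r G) (hmG : ∀ i, m i ∈ G)
    (hm : ∀ i, IsMinOn (r i) G (m i)) (ht : t ∈ beatingExcept r m p)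
    (hmax : IsMaxOn (r p) (beatingExcept r m p) t) : IsDominant r (insert t G) := by
  have ht_le : ∀ e ∈ G, r p t ≤ r p e := by
    obtain ⟨k, hk⟩ := hG t
    rcases eq_or_ne k p with rfl | hkp
    · exact hk
    · exact absurd (ht k hkp) (hk _ (hmG k)).not_gt
  intro w
  by_cases hw : w ∈ beatingExcept r m p
  · refine ⟨p, Finset.forall_mem_insert _ _ _ |>.2 ⟨hmax hw, fun e he => ?_⟩⟩
    exact (hmax hw).trans (ht_le e he)
  · simp only [beatingExcept, mem_ofPred_eq, not_forall, not_lt] at hw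
    obtain ⟨k, hkp, hk⟩ := hw
    exact ⟨k, Finset.forall_mem_insert _ _ _ |>.2
      ⟨hk.trans (ht k hkp).le, fun e he => hk.trans (hm k he)⟩⟩

theorem IsDominant.exists_isMaxOn [Fintype I] [DecidableEq W] (hr : ∀ i, Function.Injective (r i))
    (hmG : ∀ i, m i ∈ G) (hm : ∀ i, IsMinOn (r i) G (m i)) (hcard : G.card + 1 = Fintype.card I)
    (htG : t ∉ G) (hdom : IsDominant r (insert t G)) :
    ∃ p, (∃ k, k ≠ p ∧ m k = m p) ∧ t ∈ beatingExcept r m p ∧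
      IsMaxOn (r p) (beatingExcept r m p) t := by
  -- every element of `insert t G` is minimal for some index, hence, by cardinality, for only one
  choose n hnE hn using fun i => Finset.exists_min_image (insert t G) (r i) (by simp)
  have hn_surj : ∀ e ∈ insert t G, ∃ k, n k = e := fun e he =>
    exists_eq_of_isDominant hr hdom hnE (fun i e he => hn i e he) he
  have hn_inj : Function.Injective n := by
    refine injOn_univ.1 ?_
    rw [← Finset.coe_univ]
    refine Finset.injOn_of_surjOn_of_card_le n (t := insert t G) (fun i _ => hnE i)
      (fun e he => ?_) (by rw [Finset.card_insert_of_notMem htG, hcard, Finset.card_univ])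
    simpa using hn_surj e he
  obtain ⟨p, hp⟩ := hn_surj t (by simp)
  have hn_eq : ∀ k, k ≠ p → n k = m k := fun k hk => by
    have hkG : n k ∈ G := (Finset.mem_insert.1 (hnE k)).resolve_left fun h =>
      hk (hn_inj (h.trans hp.symm))
    exact hr k (le_antisymm (hn k _ (Finset.mem_insert_of_mem (hmG k))) (hm k hkG))
  have ht : t ∈ beatingExcept r m p := fun k hk => by
    refine (hn_eq k hk ▸ hn k t (by simp)).lt_of_ne fun h => htG (hr k h ▸ hmG k)
  refine ⟨p, ?_, ht, fun w hw => ?_⟩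
  · obtain ⟨k, hk⟩ := hn_surj (m p) (Finset.mem_insert_of_mem (hmG p))
    have hkp : k ≠ p := by rintro rfl; exact htG (hp ▸ hk ▸ hmG k)
    exact ⟨k, hkp, (hn_eq k hkp).symm.trans hk⟩
  · obtain ⟨k, hk⟩ := hdom w
    rcases eq_or_ne k p with rfl | hkp
    · exact hk t (by simp)
    · exact absurd (hw k hkp) (hk _ (Finset.mem_insert_of_mem (hmG k))).not_gt

end Replacement

theorem IsSlack.exists_two_dominant_supersets [Fintype I] [Finite W] (hs : IsSlack r s)
    {G : Finset W} (hG : IsDominant r G) (hcard : G.card + 1 = Fintype.card I) {g : W} (hg : g ∈ G)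
    (hgs : g ∉ range s) :
    ∃ E₁ E₂ : Finset W, E₁ ≠ E₂ ∧
      ∀ E, (G ⊆ E ∧ E.card = Fintype.card I ∧ IsDominant r E) ↔ E = E₁ ∨ E = E₂ := by
  classical
  have hr := hs.rank_injective
  choose m hmG hm using fun i => G.exists_min_image (r i) ⟨g, hg⟩
  replace hm : ∀ i, IsMinOn (r i) G (m i) := fun i e he => hm i e he
  obtain ⟨i, -, j, -, hij, hmij, hinj_i, hinj_j⟩ :=
    exists_injOn_diff_of_card_eq_succ (s := Finset.univ) (t := G) (f := m) (fun i _ => hmG i)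
      (fun e he => by simpa using exists_eq_of_isDominant hr hG hmG hm he)
      (by rw [Finset.card_univ, hcard])
  obtain ⟨t₁, ht₁, hmax₁⟩ := hs.exists_isMaxOn_beatingExcept hm hg hgs i
  obtain ⟨t₂, ht₂, hmax₂⟩ := hs.exists_isMaxOn_beatingExcept hm hg hgs j
  have ht₁G := notMem_of_mem_beatingExcept hr hG hmG hm ⟨j, hij.symm, hmij.symm⟩ ht₁
  have ht₂G := notMem_of_mem_beatingExcept hr hG hmG hm ⟨i, hij, hmij⟩ ht₂
  refine ⟨insert t₁ G, insert t₂ G, fun h => ?_, fun E => ⟨?_, ?_⟩⟩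
  · obtain rfl : t₁ = t₂ := (Finset.mem_insert.1 (h ▸ Finset.mem_insert_self t₁ G)).resolve_right
      ht₁G
    obtain ⟨k, hk⟩ := hG t₁
    have hkm := (hk _ (hmG k)).not_gt
    exact hij ((not_imp_comm.1 (ht₁ k) hkm).symm.trans (not_imp_comm.1 (ht₂ k) hkm))
  · rintro ⟨hGE, hE, hdom⟩
    obtain ⟨t, htG, rfl⟩ := Finset.exists_eq_insert_iff.2 ⟨hGE, hcard.trans hE.symm⟩
    obtain ⟨p, ⟨k, hkp, hmk⟩, ht, hmax⟩ := hdom.exists_isMaxOn hr hmG hm hcard htG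
    have hp : p = i ∨ p = j := by
      by_contra! hp
      rcases eq_or_ne k i with rfl | hki
      · exact hkp (hinj_j (by simpa using hij) (by simpa using hp.2) hmk)
      · exact hkp (hinj_i (by simpa using hki) (by simpa using hp.1) hmk)
    rcases hp with rfl | rfl
    · exact .inl (by rw [hr p (le_antisymm (hmax₁ ht) (hmax ht₁))])
    · exact .inr (by rw [hr p (le_antisymm (hmax₂ ht) (hmax ht₂))])
  · rintro (rfl | rfl)
    · exact ⟨Finset.subset_insert _ _, by rw [Finset.card_insert_of_notMem ht₁G, hcard],
        hG.insert_of_isMaxOn hmG hm ht₁ hmax₁⟩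
    · exact ⟨Finset.subset_insert _ _, by rw [Finset.card_insert_of_notMem ht₂G, hcard],
        hG.insert_of_isMaxOn hmG hm ht₂ hmax₂⟩

theorem card_image_erase_add_one [Fintype I] [DecidableEq I] [DecidableEq W]
    (hs : Function.Injective s) (i₀ : I) :
    ((Finset.univ.erase i₀).image s).card + 1 = Fintype.card I := by
  rw [Finset.card_image_of_injective _ hs, Finset.card_erase_add_one (Finset.mem_univ _),
    Finset.card_univ]

theorem IsSlack.isDominant_insert_image_iff [Fintype I] [DecidableEq I] [DecidableEq W]
    (hs : IsSlack r s) {i₀ : I} {w : W} (hne : ∃ v, v ∉ range s)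
    (hw : w ∉ (Finset.univ.erase i₀).image s) :
    IsDominant r (insert w ((Finset.univ.erase i₀).image s)) ↔
      w ∉ range s ∧ IsMaxOn (r i₀) (range s)ᶜ w := by
  refine ⟨fun hdom => ?_, fun ⟨_, hmax⟩ v => ?_⟩
  · have hmax : IsMaxOn (r i₀) (range s)ᶜ w := fun v hv => by
      obtain ⟨k, hk⟩ := hdom v
      rcases eq_or_ne k i₀ with rfl | hki
      · exact hk w (by simp)
      · have hle := hk (s k) (Finset.mem_insert_of_mem (Finset.mem_image_of_mem s (by simp [hki])))
        exact absurd ⟨k, hs.rank_injective k (le_antisymm (hs.slack_le k v) hle)⟩ hv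
    refine ⟨?_, hmax⟩
    rintro ⟨k, rfl⟩
    obtain rfl : k = i₀ := by simpa [hs.slack_injective.eq_iff] using hw
    obtain ⟨v, hv⟩ := hne
    exact hv ⟨k, hs.rank_injective k (le_antisymm (hs.slack_le k v) (hmax hv))⟩
  · by_cases hv : v ∈ range s
    · obtain ⟨k, rfl⟩ := hv
      exact ⟨k, fun e _ => hs.slack_le k e⟩
    · refine ⟨i₀, (Finset.forall_mem_insert _ _ _).2 ⟨hmax hv, fun e he => ?_⟩⟩
      obtain ⟨j, hj, rfl⟩ := Finset.mem_image.1 he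
      exact (hs.lt_slack (Finset.ne_of_mem_erase hj).symm hv).le

theorem IsSlack.existsUnique_dominant_superset [Fintype I] [DecidableEq I] [DecidableEq W]
    [Finite W] (hs : IsSlack r s) (hne : ∃ v, v ∉ range s) (i₀ : I) :
    ∃ E₁ : Finset W, ∀ E : Finset W, ((Finset.univ.erase i₀).image s ⊆ E ∧
      E.card = Fintype.card I ∧ IsDominant r E) ↔ E = E₁ := by
  have hcard := card_image_erase_add_one hs.slack_injective i₀
  have hnotMem : ∀ v, v ∉ range s → v ∉ (Finset.univ.erase i₀).image s := fun v hv hvG => by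
    obtain ⟨j, -, rfl⟩ := Finset.mem_image.1 hvG
    exact hv ⟨j, rfl⟩
  obtain ⟨w, hws, hw⟩ := exists_max_image (range s)ᶜ (r i₀) (toFinite _) hne
  refine ⟨insert w ((Finset.univ.erase i₀).image s), fun E => ⟨?_, ?_⟩⟩
  · rintro ⟨hGE, hE, hdom⟩
    obtain ⟨v, hvG, rfl⟩ := Finset.exists_eq_insert_iff.2 ⟨hGE, hcard.trans hE.symm⟩
    obtain ⟨hvs, hv⟩ := (hs.isDominant_insert_image_iff hne hvG).1 hdom
    rw [hs.rank_injective i₀ (le_antisymm (hw v hvs) (hv hws))]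
  · rintro rfl
    exact ⟨Finset.subset_insert _ _, by rw [Finset.card_insert_of_notMem (hnotMem w hws), hcard],
      (hs.isDominant_insert_image_iff hne (hnotMem w hws)).2 ⟨hws, hw⟩⟩

theorem image_erase_subset_of_isDoor [Fintype I] [DecidableEq I] [DecidableEq W] {l : W → I}
    {i₀ : I} {G : Finset W} (hl : ∀ i, l (s i) = i) (hG : IsDoor l i₀ G)
    (hGs : ∀ g ∈ G, g ∈ range s) : (Finset.univ.erase i₀).image s ⊆ G := by
  intro w hw
  obtain ⟨j, hj, rfl⟩ := Finset.mem_image.1 hw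
  obtain ⟨e, he, hej⟩ := hG.2 j (Finset.ne_of_mem_erase hj)
  obtain ⟨k, rfl⟩ := hGs e he
  rwa [← hej, hl k]

open Classical in
theorem IsSlack.odd_sum_card_dominant_supersets [Fintype I] [Fintype W] (hs : IsSlack r s)
    (hne : ∃ v, v ∉ range s) {l : W → I} (hl : ∀ i, l (s i) = i) (i₀ : I) :
    Odd (∑ G with IsDominant r G ∧ IsDoor l i₀ G,
      (Finset.univ.filter fun E => G ⊆ E ∧ E.card = Fintype.card I ∧ IsDominant r E).card) := by
  set G₀ := (Finset.univ.erase i₀).image s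
  obtain ⟨E₀, hE₀⟩ := hs.existsUnique_dominant_superset hne i₀
  have hG₀ : IsDominant r G₀ ∧ IsDoor l i₀ G₀ := by
    obtain ⟨hsub, -, hdom⟩ := (hE₀ E₀).2 rfl
    exact ⟨hdom.mono hsub, card_image_erase_add_one hs.slack_injective i₀, fun i hi =>
      ⟨s i, Finset.mem_image_of_mem s (by simp [hi]), hl i⟩⟩
  rw [← Finset.add_sum_erase _ _ (a := G₀) (by simpa using hG₀)]
  refine Odd.add_even (by simp [G₀, hE₀, Finset.filter_eq']) (Finset.even_sum _ fun G hG => ?_)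
  obtain ⟨hne', hGdom, hGdoor⟩ : G ≠ G₀ ∧ IsDominant r G ∧ IsDoor l i₀ G := by simpa using hG
  obtain ⟨g, hg, hgs⟩ : ∃ g ∈ G, g ∉ range s := by
    by_contra! hGs
    have hG₀G : G₀ ⊆ G := image_erase_subset_of_isDoor hl hGdoor hGs
    exact hne' (Finset.eq_of_subset_of_card_le hG₀G
      (Nat.le_of_succ_le_succ (hGdoor.1.trans hG₀.2.1.symm).le)).symm
  obtain ⟨E₁, E₂, hE, hiff⟩ := hs.exists_two_dominant_supersets hGdom hGdoor.1 hg hgs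
  have hpair : (Finset.univ.filter fun E => G ⊆ E ∧ E.card = Fintype.card I ∧ IsDominant r E) =
      {E₁, E₂} := by
    ext E
    simp [hiff]
  rw [hpair, Finset.card_pair hE]
  exact even_two

theorem IsSlack.exists_dominant_fully_labelled [Finite I] [Nonempty I] [Finite W]
    (hs : IsSlack r s) (hne : ∃ v, v ∉ range s) {l : W → I} (hl : ∀ i, l (s i) = i) :
    ∃ E : Finset W, IsDominant r E ∧ ∀ i, ∃ e ∈ E, l e = i := by
  classical
  have := Fintype.ofFinite I
  have := Fintype.ofFinite W
  by_contra! hnot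
  obtain ⟨i₀⟩ := ‹Nonempty I›
  let rooms : Finset (Finset W) := {E | E.card = Fintype.card I ∧ IsDominant r E}
  let doors : Finset (Finset W) := {G | IsDominant r G ∧ IsDoor l i₀ G}
  have hcount := Finset.sum_card_bipartiteAbove_eq_sum_card_bipartiteBelow
    (s := doors) (t := rooms) (· ⊆ ·)
  have hodd : Odd (∑ G ∈ doors, (rooms.bipartiteAbove (· ⊆ ·) G).card) := by
    refine (Finset.sum_congr rfl fun G _ => congrArg Finset.card ?_) ▸
      hs.odd_sum_card_dominant_supersets hne hl i₀
    ext E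
    simp only [Finset.bipartiteAbove, rooms, Finset.mem_filter]
    tauto
  have heven : Even (∑ E ∈ rooms, (doors.bipartiteBelow (· ⊆ ·) E).card) := by
    refine Finset.even_sum _ fun E hE => ?_
    obtain ⟨hcard, hdom⟩ : E.card = Fintype.card I ∧ IsDominant r E := by simpa [rooms] using hE
    have hlE : ¬∀ i, ∃ e ∈ E, l e = i := by simpa using hnot E hdom
    have hdoors : doors.bipartiteBelow (· ⊆ ·) E = E.powerset.filter (IsDoor l i₀) := by
      ext G
      simp only [Finset.bipartiteBelow, doors, Finset.mem_filter, Finset.mem_univ,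
        true_and, Finset.mem_powerset]
      exact ⟨fun h => ⟨h.2, h.1.2⟩, fun h => ⟨⟨hdom.mono h.1, h.2⟩, h.1⟩⟩
    rw [hdoors]
    exact even_card_doors l i₀ hcard hlE
  exact Nat.not_even_iff_odd.2 (hcount ▸ hodd) heven

/-- The ranking of `T ⊕ I` that extends `r` by the slack points `Sum.inr j`, ties being broken by
an enumeration of `T ⊕ I`. -/
def slackRank [Fintype I] {T : Type*} [Fintype T] [DecidableEq I] (r : I → T → α) (i : I)
    (w : T ⊕ I) : WithBot (WithTop α) ×ₗ Fin (Fintype.card (T ⊕ I)) :=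
  toLex (w.elim (fun t => ((r i t : WithTop α) : WithBot (WithTop α)))
    (fun j => if j = i then ⊥ else (⊤ : WithTop α)), Fintype.equivFin _ w)

theorem isSlack_slackRank {T : Type*} [Fintype I] [Fintype T] [DecidableEq I] (r : I → T → α) :
    IsSlack (slackRank r) Sum.inr where
  rank_injective i w w' h := (Fintype.equivFin _).injective (congrArg (fun p => (ofLex p).2) h)
  slack_injective := Sum.inr_injective
  slack_le i w := by
    rcases eq_or_ne w (Sum.inr i) with rfl | hw
    · rfl
    · refine (Prod.Lex.toLex_lt_toLex.2 (.inl ?_)).le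
      rcases w with t | j
      · simp
      · have hji : j ≠ i := by rintro rfl; exact hw rfl
        simp [hji]
  lt_slack {i j w} hij hw := by
    refine Prod.Lex.toLex_lt_toLex.2 (.inl ?_)
    rcases w with t | k
    · simp only [Sum.elim_inl, Sum.elim_inr, if_neg hij.symm]
      exact WithBot.coe_lt_coe.2 (WithTop.coe_lt_top _)
    · simp at hw

theorem exists_dominant_labels {T : Type*} [Finite I] [Finite T] (r : I → T → α) (c : T → I) :
    ∃ S : Finset T, ∀ t, ∃ s ∈ S, ∀ s' ∈ S, r (c s) t ≤ r (c s) s' := by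
  classical
  rcases isEmpty_or_nonempty T with hT | ⟨⟨t₀⟩⟩
  · exact ⟨∅, hT.elim⟩
  have := Fintype.ofFinite I
  have := Fintype.ofFinite T
  have : Nonempty I := ⟨c t₀⟩
  obtain ⟨E, hdom, hlab⟩ := (isSlack_slackRank r).exists_dominant_fully_labelled
    ⟨Sum.inl t₀, by simp⟩ (l := Sum.elim c id) fun _ => rfl
  refine ⟨E.preimage Sum.inl Sum.inl_injective.injOn, fun t => ?_⟩
  obtain ⟨i, hi⟩ := hdom (Sum.inl t)
  obtain ⟨s | j, hE, rfl⟩ := hlab i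
  · refine ⟨s, by simpa using hE, fun s' hs' => ?_⟩
    have := (Prod.Lex.toLex_le_toLex'.1 (hi _ (by simpa using hs'))).1
    simpa using this
  · have := (Prod.Lex.toLex_le_toLex'.1 (hi _ hE)).1
    simp at this

end Scarf

section Brouwer

open Filter Topology

variable {I : Type*}

theorem exists_dominant_representatives {P α : Type*} [LinearOrder α] [Finite I] [Nonempty P]
    (r : I → P → α) (c : P → I) (F : Finset P) :
    ∃ (C : Set I) (s : I → P), (∀ i ∈ C, c (s i) = i) ∧
      ∀ t ∈ F, ∃ i ∈ C, ∀ j ∈ C, r i t ≤ r i (s j) := by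
  obtain ⟨S, hS⟩ := exists_dominant_labels (fun i (t : F) => r i t) (fun t => c t)
  have hrep : ∀ i, ∃ p : P, ∀ s ∈ S, c s = i → c p = i ∧ ∃ s' ∈ S, (s' : P) = p := by
    intro i
    by_cases hi : ∃ s ∈ S, c s = i
    · obtain ⟨s, hs, hsi⟩ := hi
      exact ⟨s, fun _ _ _ => ⟨hsi, s, hs, rfl⟩⟩
    · exact ⟨Classical.arbitrary P, fun s hs hsi => absurd ⟨s, hs, hsi⟩ hi⟩
  choose p hp using hrep
  refine ⟨{i | ∃ s ∈ S, c s = i}, p, ?_, fun t ht => ?_⟩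
  · rintro i ⟨s, hs, hsi⟩
    exact (hp i s hs hsi).1
  · obtain ⟨s, hs, hdom⟩ := hS ⟨t, ht⟩
    refine ⟨c s, ⟨s, hs, rfl⟩, ?_⟩
    rintro j ⟨s', hs', hj⟩
    obtain ⟨-, s'', hs'', hp''⟩ := hp j s' hs' hj
    exact hp'' ▸ hdom s'' hs''

theorem exists_dominant_limit {P : Type*} [TopologicalSpace P] [CompactSpace P] [Nonempty P]
    [Finite I] {r : I → P → ℝ} (hr : ∀ i, Continuous (r i)) (c : P → I) :
    ∃ (C : Set I) (s : I → P), (∀ i ∈ C, s i ∈ closure (c ⁻¹' {i})) ∧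
      ∀ t, ∃ i ∈ C, ∀ j ∈ C, r i t ≤ r i (s j) := by
  choose C s hcs hdom using exists_dominant_representatives r c
  let U : Ultrafilter (Finset P) := Ultrafilter.of atTop
  have hlim : ∀ i, ∃ x, Tendsto (fun F => s F i) U (𝓝 x) := fun i =>
    ⟨_, (U.map fun F => s F i).le_nhds_lim⟩
  choose x hx using hlim
  refine ⟨{i | ∀ᶠ F in U, i ∈ C F}, x, fun i hi => ?_, fun t => ?_⟩
  · exact mem_closure_of_tendsto (hx i) (hi.mono fun F hF => hcs F i hF)
  · have ht : ∀ᶠ F in (U : Filter (Finset P)), t ∈ F :=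
      Ultrafilter.of_le atTop ((eventually_ge_atTop {t}).mono fun F hF => by simpa using hF)
    obtain ⟨i, hi⟩ := U.eventually_exists_iff.1 (ht.mono fun F hF => hdom F t hF)
    refine ⟨i, hi.mono fun F hF => hF.1, fun j hj => ?_⟩
    refine ge_of_tendsto (((hr i).tendsto _).comp (hx j)) ?_
    filter_upwards [hi, hj] with F hF hjF using hF.2 j hjF

variable [Fintype I]

theorem one_le_sum_of_forall_exists_le {C : Finset I} (hC : C.Nonempty) {a : I → ℝ}
    (ha : ∀ i ∈ C, 0 ≤ a i) (h : ∀ t : stdSimplex ℝ I, ∃ i ∈ C, t i ≤ a i) :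
    1 ≤ ∑ i ∈ C, a i := by
  classical
  by_contra! hlt
  set ε := (1 - ∑ i ∈ C, a i) / C.card
  have hε : 0 < ε := div_pos (by linarith) (by exact_mod_cast hC.card_pos)
  let t : I → ℝ := fun i => if i ∈ C then a i + ε else 0
  have ht : t ∈ stdSimplex ℝ I := by
    refine ⟨fun i => ?_, ?_⟩
    · by_cases hi : i ∈ C <;> simp [t, hi, add_nonneg, ha, hε.le]
    · have hcard : (C.card : ℝ) ≠ 0 := by exact_mod_cast hC.card_pos.ne'
      simp [t, Finset.sum_ite_mem, Finset.sum_add_distrib, ε, mul_div_cancel₀ _ hcard]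
  obtain ⟨i, hi, hle⟩ := h ⟨t, ht⟩
  have hti : (⟨t, ht⟩ : stdSimplex ℝ I) i = a i + ε := if_pos hi
  linarith

theorem exists_forall_mem_closure_label [Nonempty I] (c : stdSimplex ℝ I → I) :
    ∃ x : stdSimplex ℝ I, ∀ i, x i ≠ 0 → x ∈ closure (c ⁻¹' {i}) := by
  classical
  obtain ⟨C, s, hs, hdom⟩ := exists_dominant_limit
    (r := fun i (x : stdSimplex ℝ I) => x i)
    (fun i => (continuous_apply i).comp continuous_subtype_val) c
  lift C to Finset I using toFinite C
  obtain ⟨i₀, hi₀, -⟩ := hdom (Classical.arbitrary _)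
  choose m hmC hm using fun i => C.exists_min_image (fun j => s j i) ⟨i₀, hi₀⟩
  have hsum : 1 ≤ ∑ i ∈ C, s (m i) i := one_le_sum_of_forall_exists_le ⟨i₀, hi₀⟩
    (fun i _ => stdSimplex.zero_le _ _) fun t => (hdom t).imp fun i hi => ⟨hi.1, hi.2 _ (hmC i)⟩
  let b : I → ℝ := fun i => if i ∈ C then s (m i) i else 0
  have hb : ∀ j ∈ C, ⇑(s j) = b := fun j hj => by
    have hle : ∀ i, b i ≤ s j i := fun i => by
      by_cases hi : i ∈ C
      · simpa [b, hi] using hm i j hj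
      · simp [b, hi]
    have hsum_b : 1 ≤ ∑ i, b i := by simpa [b, Finset.sum_ite_mem] using hsum
    have heq : ∑ i, b i = ∑ i, s j i :=
      (Finset.sum_le_sum fun i _ => hle i).antisymm (by simpa using hsum_b)
    funext i
    exact ((Finset.sum_eq_sum_iff_of_le fun i _ => hle i).1 heq i (Finset.mem_univ i)).symm
  refine ⟨s i₀, fun i hi => ?_⟩
  have hiC : i ∈ C := by
    by_contra hiC
    exact hi (by simp [hb i₀ hi₀, b, hiC])
  rw [stdSimplex.ext ((hb i₀ hi₀).trans (hb i hiC).symm)]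
  exact hs i hiC

theorem exists_fixedPoint_of_continuous_stdSimplex [Nonempty I]
    {f : stdSimplex ℝ I → stdSimplex ℝ I} (hf : Continuous f) : ∃ x, f x = x := by
  have hlab : ∀ x, ∃ i, x i ≤ f x i := fun x => by
    obtain ⟨i, -, hi⟩ :=
      Finset.exists_le_of_sum_le (f := x) (g := f x) Finset.univ_nonempty (by simp)
    exact ⟨i, hi⟩
  choose c hc using hlab
  obtain ⟨x, hx⟩ := exists_forall_mem_closure_label c
  have hcoord : ∀ i, Continuous fun x : stdSimplex ℝ I => x i := fun i =>
    (continuous_apply i).comp continuous_subtype_val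
  have hle : ∀ i, x i ≤ f x i := fun i => by
    rcases eq_or_ne (x i) 0 with h0 | h0
    · simp [h0]
    · refine closure_minimal ?_ (isClosed_le (hcoord i) ((hcoord i).comp hf)) (hx i h0)
      rintro y rfl
      exact hc y
  refine ⟨x, stdSimplex.ext (funext fun i => ?_)⟩
  exact ((Finset.sum_eq_sum_iff_of_le fun i _ => hle i).1 (by simp) i (Finset.mem_univ i)).symm

end Brouwer

section Tychonoff

theorem convex_setOf_weights_supportedOn {ι : Type*} [Fintype ι] (s : Set ι) :
    Convex ℝ {w : ι → ℝ | w ∈ stdSimplex ℝ ι ∧ ∀ i, w i ≠ 0 → i ∈ s} := by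
  have h : {w : ι → ℝ | w ∈ stdSimplex ℝ ι ∧ ∀ i, w i ≠ 0 → i ∈ s} =
      stdSimplex ℝ ι ∩
        ⋂ i ∈ sᶜ, LinearMap.ker (LinearMap.proj (R := ℝ) (φ := fun _ : ι => ℝ) i) := by
    ext w
    simp only [mem_ofPred_eq, mem_inter_iff, mem_iInter, SetLike.mem_coe, LinearMap.mem_ker,
      LinearMap.proj_apply, mem_compl_iff, not_imp_comm, ne_eq]
  rw [h]
  exact (convex_stdSimplex ℝ ι).inter (convex_iInter₂ fun i _ => Submodule.convex _)

variable {E : Type*} [AddCommGroup E] [TopologicalSpace E] [IsTopologicalAddGroup E] [T2Space E]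
  {K : Set E}

theorem exists_continuous_weights_of_nhds_zero [CompactSpace K] {N : Set E} (hN : IsOpen N)
    (hN0 : (0 : E) ∈ N) :
    ∃ (t : Finset K) (φ : C(K, t → ℝ)), ∀ y, φ y ∈ stdSimplex ℝ t ∧
      ∀ c, φ y c ≠ 0 → (c : E) - y ∈ N := by
  have hnear : ∀ c : K, IsOpen {y : K | (c : E) - y ∈ N} := fun c =>
    hN.preimage (by fun_prop)
  obtain ⟨t, ht⟩ := isCompact_univ.elim_nhds_subcover (fun c : K => {y : K | (c : E) - y ∈ N})
    fun c _ => (hnear c).mem_nhds (by simpa using hN0)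
  classical
  obtain ⟨φ, hφ⟩ := exists_continuous_forall_mem_convex_of_local_const
    (t := fun y : K => {w : t → ℝ | w ∈ stdSimplex ℝ t ∧
      ∀ c, w c ≠ 0 → c ∈ {c : t | ((c : K) : E) - y ∈ N}})
    (fun y => convex_setOf_weights_supportedOn _) fun y => by
      obtain ⟨c, hct, hcy⟩ : ∃ c ∈ t, (c : E) - y ∈ N := by simpa using ht.2 (mem_univ y)
      refine ⟨Pi.single ⟨c, hct⟩ 1, ?_⟩
      filter_upwards [(hnear c).mem_nhds hcy] with z hz
      refine ⟨single_mem_stdSimplex ℝ _, fun d hd => ?_⟩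
      obtain rfl : d = ⟨c, hct⟩ := by
        by_contra hne
        exact hd (Pi.single_eq_of_ne hne 1)
      exact hz
  exact ⟨t, φ, hφ⟩

variable [Module ℝ E] [ContinuousSMul ℝ E]

theorem exists_sub_mem_of_nhds_zero_convex (hK : IsCompact K) (hKconv : Convex ℝ K)
    [Nonempty K] {f : K → K} (hf : Continuous f) {N : Set E} (hN : IsOpen N)
    (hN0 : (0 : E) ∈ N) (hNconv : Convex ℝ N) : ∃ x : K, (x : E) - f x ∈ N := by
  have := isCompact_iff_compactSpace.1 hK
  obtain ⟨t, φ, hφ⟩ := exists_continuous_weights_of_nhds_zero (K := K) hN hN0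
  have : Nonempty t := by
    by_contra hempty
    have := (hφ (Classical.arbitrary K)).1.2
    simp [not_nonempty_iff.1 hempty] at this
  let bary : stdSimplex ℝ t → K := fun w => ⟨∑ c, w c • ((c : K) : E),
    hKconv.sum_mem (fun c _ => stdSimplex.zero_le w c) (stdSimplex.sum_eq_one w) fun c _ => c.1.2⟩
  have hbary : Continuous bary := Continuous.subtype_mk
    (continuous_finsetSum _ fun c _ =>
      ((continuous_apply c).comp continuous_subtype_val).smul continuous_const) _
  obtain ⟨w, hw⟩ := exists_fixedPoint_of_continuous_stdSimplex
    (f := fun w => ⟨φ (f (bary w)), (hφ _).1⟩)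
    (Continuous.subtype_mk (φ.continuous.comp (hf.comp hbary)) _)
  refine ⟨bary w, ?_⟩
  have hsub : (bary w : E) - f (bary w) = ∑ c, w c • (((c : K) : E) - f (bary w)) := by
    simp only [smul_sub, Finset.sum_sub_distrib, ← Finset.sum_smul, stdSimplex.sum_eq_one,
      one_smul, bary]
  rw [hsub, ← finsum_eq_sum_of_fintype]
  refine hNconv.finsum_mem (fun c => stdSimplex.zero_le w c)
    (by rw [finsum_eq_sum_of_fintype, stdSimplex.sum_eq_one]) fun c hc => ?_
  rw [← hw] at hc
  exact (hφ _).2 c hc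

variable [LocallyConvexSpace ℝ E]

theorem exists_fixedPoint_of_continuous_of_isCompact_convex (hK : IsCompact K)
    (hKconv : Convex ℝ K) (hKne : K.Nonempty) {f : K → K} (hf : Continuous f) : ∃ x, f x = x := by
  by_contra! hne
  have := isCompact_iff_compactSpace.1 hK
  have := hKne.to_subtype
  have hclosed : IsClosed (range fun x : K => (x : E) - f x) :=
    (isCompact_range (by fun_prop)).isClosed
  have h0 : (0 : E) ∉ range fun x : K => (x : E) - f x := by
    rintro ⟨x, hx⟩
    exact hne x (Subtype.ext (sub_eq_zero.1 hx).symm)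
  obtain ⟨N, ⟨hN0, hN, hNconv⟩, hNsub⟩ := (LocallyConvexSpace.convex_open_basis_zero ℝ E).mem_iff.1
    (hclosed.isOpen_compl.mem_nhds h0)
  obtain ⟨x, hx⟩ := exists_sub_mem_of_nhds_zero_convex hK hKconv hf hN hN0 hNconv
  exact hNsub hx ⟨x, rfl⟩

theorem exists_fixedPoint_of_continuous_pi {I : Type*} {X : I → Set E}
    (hcpt : ∀ i, IsCompact (X i)) (hconv : ∀ i, Convex ℝ (X i)) (hne : ∀ i, (X i).Nonempty)
    {f : ((i : I) → X i) → (i : I) → X i} (hf : Continuous f) : ∃ x, f x = x := by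
  let e : univ.pi X ≃ₜ ((i : I) → X i) :=
    { Equiv.Set.univPi X with
      continuous_toFun := continuous_pi fun i =>
        Continuous.subtype_mk ((continuous_apply i).comp continuous_subtype_val) _
      continuous_invFun := Continuous.subtype_mk
        (continuous_pi fun i => continuous_subtype_val.comp (continuous_apply i)) _ }
  obtain ⟨x, hx⟩ := exists_fixedPoint_of_continuous_of_isCompact_convex
    (isCompact_univ_pi hcpt) (convex_pi fun i _ => hconv i) (univ_pi_nonempty_iff.2 hne)
    (f := e.symm ∘ f ∘ e) (by fun_prop)
  exact ⟨e x, by simpa using congrArg e hx⟩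

end Tychonoff

section ProperSeparation

variable {E : Type*} [NormedAddCommGroup E] [NormedSpace ℝ E] [FiniteDimensional ℝ E] {C : Set E}

theorem interior_nonempty_of_span_cone_eq_top (K : ConvexCone ℝ E) (hne : (K : Set E).Nonempty)
    (hspan : Submodule.span ℝ (K : Set E) = ⊤) : (interior (K : Set E)).Nonempty := by
  rw [K.convex.interior_nonempty_iff_affineSpan_eq_top,
    AffineSubspace.affineSpan_eq_top_iff_vectorSpan_eq_top_of_nonempty ℝ E E hne, eq_top_iff,
    ← hspan, Submodule.span_le]
  intro k hk
  simpa [two_smul] using vsub_mem_vectorSpan ℝ (K.smul_mem two_pos hk) hk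

theorem exists_functional_nonpos_of_span_cone_eq_top (K : ConvexCone ℝ E)
    (hne : (K : Set E).Nonempty) (hspan : Submodule.span ℝ (K : Set E) = ⊤)
    (h0 : (0 : E) ∉ K) : ∃ p : StrongDual ℝ E, (∀ y ∈ K, p y ≤ 0) ∧ ∃ y ∈ K, p y < 0 := by
  obtain ⟨p, hp_ne, hp⟩ := geometric_hahn_banach_of_nonempty_interior_point K.convex
    (fun h => h0 (interior_subset h)) (interior_nonempty_of_span_cone_eq_top K hne hspan)
  simp only [map_zero, SetLike.mem_coe] at hp
  refine ⟨p, hp, ?_⟩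
  by_contra! hnonneg
  exact hp_ne (ContinuousLinearMap.coe_injective (LinearMap.ext_on hspan
    fun y hy => le_antisymm (hp y hy) (hnonneg y hy)))

theorem exists_functional_nonpos_of_zero_notMem (hC : Convex ℝ C) (hne : C.Nonempty)
    (h0 : (0 : E) ∉ C) : ∃ p : StrongDual ℝ E, (∀ y ∈ C, p y ≤ 0) ∧ ∃ y ∈ C, p y < 0 := by
  let K := ConvexCone.hull ℝ C
  let V := Submodule.span ℝ (K : Set E)
  have hCK : C ⊆ K := ConvexCone.subset_hull
  have h0K : (0 : E) ∉ K := fun h => by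
    obtain ⟨c, hc, y, hy, hcy⟩ := (ConvexCone.mem_hull_of_convex hC).1 h
    exact h0 ((smul_eq_zero_iff_right hc.ne').1 hcy ▸ hy)
  obtain ⟨y₀, hy₀⟩ := hne
  obtain ⟨f, hf, z, hz, hfz⟩ := exists_functional_nonpos_of_span_cone_eq_top (K.comap V.subtype)
    ⟨⟨y₀, Submodule.subset_span (hCK hy₀)⟩, hCK hy₀⟩ Submodule.span_span_coe_preimage h0K
  obtain ⟨p, hp⟩ := LinearMap.exists_extend (f : V →ₗ[ℝ] ℝ)
  have hpf : ∀ v : V, p v = f v := LinearMap.congr_fun hp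
  obtain ⟨c, hc, y, hy, hcy⟩ := (ConvexCone.mem_hull_of_convex hC).1 hz
  refine ⟨p.toContinuousLinearMap, fun y hy => ?_, y, hy, ?_⟩
  · exact (hpf ⟨y, Submodule.subset_span (hCK hy)⟩).trans_le (hf _ (hCK hy))
  · have hcpy : c * p y < 0 := by
      rwa [← smul_eq_mul, ← map_smul, show c • y = z from hcy, hpf]
    exact neg_of_mul_neg_right hcpy hc.le

theorem mem_of_forall_functional_eq (hC : Convex ℝ C) (hne : C.Nonempty) {c : E}
    (h : ∀ p : StrongDual ℝ E, (∀ y ∈ C, p y ≤ p c) → ∀ y ∈ C, p y = p c) : c ∈ C := by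
  by_contra hc
  obtain ⟨p, hp, y, hy, hlt⟩ := exists_functional_nonpos_of_zero_notMem
    (C := (fun y => y + c) ⁻¹' C) (hC.translate_preimage_left c)
    (hne.preimage (add_right_surjective c)) (by simpa using hc)
  have hpc : p (y + c) = p c :=
    h p (fun y hy => by simpa using hp (y - c) (by simpa using hy)) _ hy
  exact hlt.ne (by simpa using hpc)

variable {ι : Type*} {z : ι → E} {a : ι → ℝ} {s : ℝ} {c : E}

theorem mem_of_hasSum_smul_of_dense (hC : Convex ℝ C) (hne : C.Nonempty)
    (hz : ∀ i, z i ∈ closure C) (hdense : C ⊆ closure (range z)) (ha : ∀ i, 0 < a i)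
    (hs : HasSum a s) (hc : HasSum (fun i => a i • z i) (s • c)) : c ∈ C := by
  refine mem_of_forall_functional_eq hC hne fun p hp y hy => ?_
  have hpz : ∀ i, p (z i) ≤ p c := fun i =>
    closure_minimal hp (isClosed_le p.continuous continuous_const) (hz i)
  have hsum : HasSum (fun i => a i * (p c - p (z i))) 0 := by
    simpa [mul_sub] using (hs.mul_right (p c)).sub (hc.mapL p)
  have hzero := (hasSum_zero_iff_of_nonneg fun i =>
    mul_nonneg (ha i).le (sub_nonneg.2 (hpz i))).1 hsum
  refine closure_minimal ?_ (isClosed_eq p.continuous continuous_const) (hdense hy)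
  rintro _ ⟨i, rfl⟩
  have hi : p c - p (z i) = 0 := (mul_eq_zero_iff_left (ha i).ne').1 (congrFun hzero i)
  exact (sub_eq_zero.1 hi).symm

end ProperSeparation

section Selection

open Filter Topology

variable {Z Y : Type*} [TopologicalSpace Z] {Φ : Z → Set Y}

theorem lowerHemicontinuous_inter_of_mem_closed [TopologicalSpace Y] (hΦ : LowerHemicontinuous Φ)
    {C : Set Z} (hC : IsClosed C) {B : Set Y} (hB : IsOpen B) :
    LowerHemicontinuous fun x => {y ∈ Φ x | x ∈ C → y ∈ B} := by
  rintro x V ⟨hV, y, ⟨hy, hyB⟩, hyV⟩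
  by_cases hx : x ∈ C
  · filter_upwards [hΦ x (B ∩ V) ⟨hB.inter hV, y, hy, hyB hx, hyV⟩]
    rintro x' ⟨-, y', hy', hyB', hyV'⟩
    exact ⟨hV, y', ⟨hy', fun _ => hyB'⟩, hyV'⟩
  · filter_upwards [hΦ x V ⟨hV, y, hy, hyV⟩, hC.isOpen_compl.mem_nhds hx]
    rintro x' ⟨-, y', hy', hyV'⟩ hx'
    exact ⟨hV, y', ⟨hy', fun h => absurd h hx'⟩, hyV'⟩

theorem lowerHemicontinuous_inter_ball [PseudoMetricSpace Y] (hΦ : LowerHemicontinuous Φ)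
    {f : Z → Y} (hf : Continuous f) (ε : ℝ) :
    LowerHemicontinuous fun x => Φ x ∩ Metric.ball (f x) ε := by
  rintro x V ⟨hV, y, ⟨hy, hyf⟩, hyV⟩
  obtain ⟨δ, hyδ, hδ⟩ := exists_between (Metric.mem_ball.1 hyf)
  filter_upwards [hΦ x (V ∩ Metric.ball (f x) δ) ⟨hV.inter Metric.isOpen_ball, y, hy, hyV, hyδ⟩,
    hf.continuousAt (Metric.ball_mem_nhds (f x) (sub_pos.2 hδ))]
  rintro x' ⟨-, y', hy', hyV', hyδ'⟩ hx'
  refine ⟨hV, y', ⟨hy', Metric.mem_ball.2 ?_⟩, hyV'⟩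
  have hfx' : dist (f x') (f x) < ε - δ := hx'
  linarith [dist_triangle_right y' (f x') (f x), Metric.mem_ball.1 hyδ']

theorem exists_continuous_dist_le_of_dist_le_geometric [PseudoMetricSpace Y] [CompleteSpace Y]
    {f : ℕ → Z → Y} (hf : ∀ n, Continuous (f n)) {C r : ℝ} (hr0 : 0 ≤ r) (hr : r < 1)
    (hdist : ∀ n x, dist (f n x) (f (n + 1) x) ≤ C * r ^ n) :
    ∃ g : C(Z, Y), ∀ n x, dist (f n x) (g x) ≤ C * r ^ n / (1 - r) := by
  choose g hg using fun x => cauchySeq_tendsto_of_complete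
    (cauchySeq_of_le_geometric r C hr fun n => hdist n x)
  have hfg : ∀ n x, dist (f n x) (g x) ≤ C * r ^ n / (1 - r) := fun n x =>
    dist_le_of_le_geometric_of_tendsto r C hr (fun n => hdist n x) (hg x) n
  have hzero : Tendsto (fun n => C * r ^ n / (1 - r)) atTop (𝓝 0) := by
    simpa using ((tendsto_pow_atTop_nhds_zero_of_lt_one hr0 hr).const_mul C).div_const (1 - r)
  have hunif : TendstoUniformly f g atTop := Metric.tendstoUniformly_iff.2 fun ε hε =>
    (hzero.eventually (gt_mem_nhds hε)).mono fun n hn x =>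
      (dist_comm _ _).trans_lt ((hfg n x).trans_lt hn)
  exact ⟨⟨g, hunif.continuous (Frequently.of_forall hf)⟩, hfg⟩

variable [NormalSpace Z] [ParacompactSpace Z] [NormedAddCommGroup Y] [NormedSpace ℝ Y]

theorem exists_continuous_inter_ball_nonempty (hΦ : LowerHemicontinuous Φ)
    (hne : ∀ x, (Φ x).Nonempty) (hconv : ∀ x, Convex ℝ (Φ x)) {ε : ℝ} (hε : 0 < ε) :
    ∃ f : C(Z, Y), ∀ x, (Φ x ∩ Metric.ball (f x) ε).Nonempty := by
  obtain ⟨f, hf⟩ := exists_continuous_forall_mem_convex_of_local_const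
    (fun x => (hconv x).thickening ε) fun x => by
      obtain ⟨y, hy⟩ := hne x
      refine ⟨y, (hΦ x _ ⟨Metric.isOpen_ball, y, hy, Metric.mem_ball_self hε⟩).mono ?_⟩
      rintro x' ⟨-, z, hz, hzy⟩
      exact Metric.mem_thickening_iff.2 ⟨z, hz, Metric.mem_ball'.1 hzy⟩
  refine ⟨f, fun x => ?_⟩
  obtain ⟨z, hz, hdist⟩ := Metric.mem_thickening_iff.1 (hf x)
  exact ⟨z, hz, Metric.mem_ball'.2 hdist⟩

theorem exists_continuous_inter_ball_nonempty_of_le (hΦ : LowerHemicontinuous Φ)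
    (hconv : ∀ x, Convex ℝ (Φ x)) {f : C(Z, Y)} {ε δ : ℝ} (hδ : 0 < δ) (hδε : δ ≤ ε)
    (hf : ∀ x, (Φ x ∩ Metric.ball (f x) ε).Nonempty) :
    ∃ g : C(Z, Y), (∀ x, (Φ x ∩ Metric.ball (g x) δ).Nonempty) ∧
      ∀ x, dist (f x) (g x) ≤ 2 * ε := by
  obtain ⟨g, hg⟩ := exists_continuous_inter_ball_nonempty
    (lowerHemicontinuous_inter_ball hΦ f.continuous ε) hf
    (fun x => (hconv x).inter (convex_ball _ _)) hδ
  refine ⟨g, fun x => (hg x).mono (inter_subset_inter_left _ inter_subset_left), fun x => ?_⟩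
  obtain ⟨y, ⟨-, hyf⟩, hyg⟩ := hg x
  linarith [dist_triangle_left (f x) (g x) y, Metric.mem_ball.1 hyf, Metric.mem_ball.1 hyg]

theorem exists_seq_continuous_inter_ball_nonempty (hΦ : LowerHemicontinuous Φ)
    (hne : ∀ x, (Φ x).Nonempty) (hconv : ∀ x, Convex ℝ (Φ x)) :
    ∃ f : ℕ → C(Z, Y), (∀ n x, (Φ x ∩ Metric.ball (f n x) ((1 / 2) ^ n)).Nonempty) ∧
      ∀ n x, dist (f n x) (f (n + 1) x) ≤ 2 * (1 / 2) ^ n := by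
  let S : ℕ → Type _ := fun n =>
    {f : C(Z, Y) // ∀ x, (Φ x ∩ Metric.ball (f x) ((1 / 2) ^ n)).Nonempty}
  obtain ⟨f₀, hf₀⟩ := exists_continuous_inter_ball_nonempty hΦ hne hconv
    (show (0 : ℝ) < (1 / 2) ^ 0 by norm_num)
  have hnext : ∀ n (f : S n), ∃ g : S (n + 1), ∀ x, dist (f.1 x) (g.1 x) ≤ 2 * (1 / 2) ^ n := by
    intro n f
    obtain ⟨g, hg, hfg⟩ := exists_continuous_inter_ball_nonempty_of_le hΦ hconv
      (δ := (1 / 2) ^ (n + 1)) (by positivity)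
      (pow_le_pow_of_le_one (by norm_num) (by norm_num) n.le_succ) f.2
    exact ⟨⟨g, hg⟩, hfg⟩
  choose next hnext using hnext
  let f : ∀ n, S n := fun n => Nat.rec ⟨f₀, hf₀⟩ next n
  exact ⟨fun n => (f n).1, fun n => (f n).2, fun n => hnext n (f n)⟩

variable [CompleteSpace Y]

theorem exists_continuous_mem_closure (hΦ : LowerHemicontinuous Φ)
    (hne : ∀ x, (Φ x).Nonempty) (hconv : ∀ x, Convex ℝ (Φ x)) :
    ∃ f : C(Z, Y), ∀ x, f x ∈ closure (Φ x) := by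
  obtain ⟨f, hf, hdist⟩ := exists_seq_continuous_inter_ball_nonempty hΦ hne hconv
  obtain ⟨g, hg⟩ := exists_continuous_dist_le_of_dist_le_geometric (fun n => (f n).continuous)
    (by norm_num) (by norm_num) hdist
  refine ⟨g, fun x => Metric.mem_closure_iff.2 fun ε hε => ?_⟩
  obtain ⟨n, hn⟩ := exists_pow_lt_of_lt_one (show 0 < ε / 5 by positivity)
    (show (1 / 2 : ℝ) < 1 by norm_num)
  obtain ⟨y, hy, hyf⟩ := hf n x
  refine ⟨y, hy, ?_⟩
  have hfg : dist (f n x) (g x) ≤ 4 * (1 / 2) ^ n := (hg n x).trans_eq (by ring)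
  linarith [dist_triangle_left (g x) y (f n x), Metric.mem_ball'.1 hyf]

theorem exists_continuous_mem_closure_of_inter_nonempty (hΦ : LowerHemicontinuous Φ)
    (hne : ∀ x, (Φ x).Nonempty) (hconv : ∀ x, Convex ℝ (Φ x)) {C : Set Z} (hC : IsClosed C)
    {B : Set Y} (hB : IsOpen B) (hBconv : Convex ℝ B) (hCB : ∀ x ∈ C, (Φ x ∩ B).Nonempty) :
    ∃ f : C(Z, Y), (∀ x, f x ∈ closure (Φ x)) ∧ ∀ x ∈ C, f x ∈ closure B := by
  obtain ⟨f, hf⟩ := exists_continuous_mem_closure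
    (lowerHemicontinuous_inter_of_mem_closed hΦ hC hB)
    (fun x => by
      by_cases hx : x ∈ C
      · exact (hCB x hx).mono fun y hy => ⟨hy.1, fun _ => hy.2⟩
      · exact (hne x).mono fun y hy => ⟨hy, fun h => absurd h hx⟩)
    (fun x y₁ h₁ y₂ h₂ a b ha hb hab => ⟨hconv x h₁.1 h₂.1 ha hb hab,
      fun hx => hBconv (h₁.2 hx) (h₂.2 hx) ha hb hab⟩)
  exact ⟨f, fun x => closure_mono (fun y hy => hy.1) (hf x),
    fun x hx => closure_mono (fun y hy => hy.2 hx) (hf x)⟩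

end Selection

section SelectionOnMetrizable

variable {Z Y : Type*} [TopologicalSpace Z] [PseudoMetrizableSpace Z] [NormedAddCommGroup Y]
  [NormedSpace ℝ Y] {Φ : Z → Set Y}

theorem exists_seq_continuous_mem_closure_dense [CompleteSpace Y] [SecondCountableTopology Y]
    (hΦ : LowerHemicontinuous Φ) (hne : ∀ x, (Φ x).Nonempty) (hconv : ∀ x, Convex ℝ (Φ x)) :
    ∃ f : ℕ → C(Z, Y), ∀ x, (∀ n, f n x ∈ closure (Φ x)) ∧
      Φ x ⊆ closure (range fun n => f n x) := by
  let _ := pseudoMetrizableSpacePseudoMetric Z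
  let B : ℕ × ℕ → Set Y := fun p => Metric.ball (denseSeq Y p.1) (1 / (p.2 + 1))
  have hopen : ∀ p, IsOpen {x | (Φ x ∩ B p).Nonempty} :=
    fun p => lowerHemicontinuous_iff_isOpen_inter_nonempty.1 hΦ _ Metric.isOpen_ball
  choose C hC _ hCB _ using fun p => (hopen p).exists_iUnion_isClosed
  choose f hf hfB using fun k : (ℕ × ℕ) × ℕ => exists_continuous_mem_closure_of_inter_nonempty hΦ
    hne hconv (hC k.1 k.2) Metric.isOpen_ball (convex_ball _ _)
    (fun x hx => (hCB k.1).subset (mem_iUnion.2 ⟨k.2, hx⟩))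
  let e := (Denumerable.eqv ((ℕ × ℕ) × ℕ)).symm
  refine ⟨f ∘ e, fun x => ⟨fun n => hf (e n) x, fun y hy => Metric.mem_closure_range_iff.2 ?_⟩⟩
  intro ε hε
  obtain ⟨m, hm⟩ := exists_nat_one_div_lt (half_pos hε)
  obtain ⟨_, hyp, p, rfl⟩ := Metric.dense_iff.1 (denseRange_denseSeq Y) y _
    (Nat.one_div_pos_of_nat (n := m))
  obtain ⟨j, hj⟩ := mem_iUnion.1 ((hCB (p, m)).superset ⟨y, hy, Metric.mem_ball'.1 hyp⟩)
  refine ⟨e.symm ((p, m), j), ?_⟩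
  have hfp : dist (f ((p, m), j) x) (denseSeq Y p) ≤ 1 / (m + 1) :=
    Metric.closure_ball_subset_closedBall (hfB ((p, m), j) x hj)
  simp only [Function.comp_apply, Equiv.apply_symm_apply]
  linarith [dist_triangle_left y (f ((p, m), j) x) (denseSeq Y p), Metric.mem_ball.1 hyp,
    dist_comm (f ((p, m), j) x) (denseSeq Y p)]

theorem exists_continuous_selection [FiniteDimensional ℝ Y] (hΦ : LowerHemicontinuous Φ)
    (hne : ∀ x, (Φ x).Nonempty) (hconv : ∀ x, Convex ℝ (Φ x)) :
    ∃ f : C(Z, Y), ∀ x, f x ∈ Φ x := by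
  have := FiniteDimensional.complete ℝ Y
  have := FiniteDimensional.proper_real Y
  obtain ⟨f, hf⟩ := exists_seq_continuous_mem_closure_dense hΦ hne hconv
  let a : ℕ → Z → ℝ := fun n x => 1 / 2 / 2 ^ n / (1 + ‖f n x‖)
  have hw : Summable fun n : ℕ => (1 : ℝ) / 2 / 2 ^ n := (hasSum_geometric_two' 1).summable
  have ha : ∀ n x, 0 < a n x := fun n x => by positivity
  have ha_le : ∀ n x, ‖a n x‖ ≤ 1 / 2 / 2 ^ n := fun n x => by
    rw [Real.norm_of_nonneg (ha n x).le]
    exact div_le_self (by positivity) (by linarith [norm_nonneg (f n x)])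
  have haf_le : ∀ n x, ‖a n x • f n x‖ ≤ 1 / 2 / 2 ^ n := fun n x => by
    rw [norm_smul, Real.norm_of_nonneg (ha n x).le, div_mul_eq_mul_div]
    exact div_le_of_le_mul₀ (by positivity) (by positivity) (by gcongr; linarith)
  have ha_cont : ∀ n, Continuous (a n) := fun n =>
    continuous_const.div (by fun_prop) fun x => by positivity
  have hs : ∀ x, 0 < ∑' n, a n x := fun x =>
    (hw.of_norm_bounded fun n => ha_le n x).tsum_pos (fun n => (ha n x).le) 0 (ha 0 x)
  refine ⟨⟨fun x => (∑' n, a n x)⁻¹ • ∑' n, a n x • f n x, ?_⟩, fun x => ?_⟩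
  · exact ((continuous_tsum ha_cont hw ha_le).inv₀ fun x => (hs x).ne').smul
      (continuous_tsum (fun n => (ha_cont n).smul (f n).continuous) hw haf_le)
  · refine mem_of_hasSum_smul_of_dense (hconv x) (hne x) (hf x).1 (hf x).2 (fun n => ha n x)
      (hw.of_norm_bounded fun n => ha_le n x).hasSum ?_
    rw [ContinuousMap.coe_mk, smul_inv_smul₀ (hs x).ne']
    exact (hw.of_norm_bounded fun n => haf_le n x).hasSum

end SelectionOnMetrizable

section QualitativeGame

open Filter Topology

variable {Z Y : Type*} [TopologicalSpace Z] {Φ : Z → Set Y} {U : Set Z}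

theorem exists_continuousOn_of_subtype [Zero Y] [TopologicalSpace Y] {f : C(U, Y)}
    (hf : ∀ x : U, f x ∈ Φ x) : ∃ g : Z → Y, ContinuousOn g U ∧ ∀ x ∈ U, g x ∈ Φ x := by
  have hext : ∀ x : U, Function.extend Subtype.val f 0 (x : Z) = f x :=
    Subtype.val_injective.extend_apply f 0
  refine ⟨Function.extend Subtype.val f 0, ?_, fun x hx => (hext ⟨x, hx⟩).symm ▸ hf ⟨x, hx⟩⟩
  exact continuousOn_iff_continuous_domRestrict.2 (f.continuous.congr fun x => (hext x).symm)

variable [NormedAddCommGroup Y] [NormedSpace ℝ Y]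

theorem LSCCorrOn.exists_continuousOn_selection [PseudoMetrizableSpace Z] [FiniteDimensional ℝ Y]
    (hΦ : LSCCorrOn Φ U) (hne : ∀ x ∈ U, (Φ x).Nonempty) (hconv : ∀ x ∈ U, Convex ℝ (Φ x)) :
    ∃ f : Z → Y, ContinuousOn f U ∧ ∀ x ∈ U, f x ∈ Φ x := by
  obtain ⟨f, hf⟩ := exists_continuous_selection (Φ := fun x : U => Φ x)
    (lowerHemicontinuous_iff_isOpen_inter_nonempty.2 hΦ) (fun x => hne x x.2)
    (fun x => hconv x x.2)
  exact exists_continuousOn_of_subtype hf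

theorem exists_continuousOn_forall_mem_convex_of_local [PseudoMetrizableSpace Z]
    (hconv : ∀ x ∈ U, Convex ℝ (Φ x))
    (hloc : ∀ x ∈ U, ∃ O ∈ 𝓝 x, ∃ g : Z → Y, ContinuousOn g O ∧ ∀ y ∈ O, g y ∈ Φ y) :
    ∃ f : Z → Y, ContinuousOn f U ∧ ∀ x ∈ U, f x ∈ Φ x := by
  let _ := pseudoMetrizableSpacePseudoMetric Z
  obtain ⟨f, hf⟩ := exists_continuous_forall_mem_convex_of_local (t := fun x : U => Φ x)
    (fun x => hconv x x.2) fun x => by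
      obtain ⟨O, hO, g, hg, hgΦ⟩ := hloc x x.2
      exact ⟨Subtype.val ⁻¹' O, continuousAt_subtype_val hO, fun y => g y,
        hg.comp continuous_subtype_val.continuousOn (mapsTo_preimage _ _), fun y hy => hgΦ y hy⟩
  exact exists_continuousOn_of_subtype hf

theorem continuous_smul_of_continuousOn {l : Z → ℝ} {g : Z → Y} {C : ℝ} (hU : IsOpen U)
    (hl : Continuous l) (hlU : ∀ x ∉ U, l x = 0) (hg : ContinuousOn g U)
    (hgC : ∀ x ∈ U, ‖g x‖ ≤ C) : Continuous fun x => l x • g x := by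
  refine continuous_iff_continuousAt.2 fun x => ?_
  by_cases hx : x ∈ U
  · exact hl.continuousAt.smul (hg.continuousAt (hU.mem_nhds hx))
  · have hbound : ∀ y, ‖l y • g y‖ ≤ ‖l y‖ * C := fun y => by
      by_cases hy : y ∈ U
      · exact (norm_smul_le _ _).trans (by gcongr; exact hgC y hy)
      · simp only [hlU y hy, zero_smul, norm_zero, zero_mul, le_refl]
    have hlim : Tendsto (fun y => ‖l y‖ * C) (𝓝 x) (𝓝 0) := by
      simpa [hlU x hx] using (hl.norm.mul_const C).tendsto x
    simpa [ContinuousAt, hlU x hx] using squeeze_zero_norm hbound hlim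

theorem exists_continuous_eq_imp_eq_of_continuousOn [PerfectlyNormalSpace Z] {X : Set Y}
    {p g : Z → Y} (hU : IsOpen U) (hX : Convex ℝ X) (hXb : Bornology.IsBounded X)
    (hp : Continuous p) (hpX : ∀ x, p x ∈ X) (hg : ContinuousOn g U) (hgX : ∀ x ∈ U, g x ∈ X) :
    ∃ f : C(Z, Y), (∀ x, f x ∈ X) ∧ ∀ x ∈ U, f x = p x → g x = p x := by
  obtain ⟨l, hlU, hl⟩ := perfectlyNormalSpace_iff_forall_isClosed_preimage_zero.1 ‹_› Uᶜ
    hU.isClosed_compl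
  have hl0 : ∀ x, l x = 0 ↔ x ∉ U := fun x => (Set.ext_iff.1 hlU x).symm
  have hcont : Continuous fun x => l x • (g x - p x) :=
    continuous_smul_of_continuousOn hU l.continuous (fun x => (hl0 x).2) (hg.sub hp.continuousOn)
      fun x hx => (dist_eq_norm (g x) (p x)).symm.trans_le
        (Metric.dist_le_diam_of_mem hXb (hgX x hx) (hpX x))
  refine ⟨⟨fun x => p x + l x • (g x - p x), hp.add hcont⟩, fun x => ?_, fun x hx hfp => ?_⟩
  · by_cases hx : x ∈ U
    · exact hX.add_smul_sub_mem (hpX x) (hgX x hx) (hl x)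
    · simpa [(hl0 x).2 hx] using hpX x
  · have hsmul : l x • (g x - p x) = 0 := by simpa using hfp
    exact sub_eq_zero.1 ((smul_eq_zero.1 hsmul).resolve_left fun h => (hl0 x).1 h hx)

theorem exists_forall_eq_empty_of_local_selections {I : Type*} [Countable I] {X : I → Set Y}
    (hne : ∀ i, (X i).Nonempty) (hcpt : ∀ i, IsCompact (X i)) (hconv : ∀ i, Convex ℝ (X i))
    {P : I → ((j : I) → X j) → Set Y} (hPX : ∀ i x, P i x ⊆ X i)
    (hPconv : ∀ i x, Convex ℝ (P i x)) (hirr : ∀ i x, (x i : Y) ∉ P i x)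
    (hloc : ∀ i x, (P i x).Nonempty → ∃ O ∈ 𝓝 x, ∃ g : ((j : I) → X j) → Y,
      ContinuousOn g O ∧ ∀ y ∈ O, g y ∈ P i y) :
    ∃ x, ∀ i, P i x = ∅ := by
  have hopen : ∀ i, IsOpen {x | (P i x).Nonempty} := fun i => isOpen_iff_mem_nhds.2 fun x hx => by
    obtain ⟨O, hO, g, -, hgP⟩ := hloc i x hx
    exact mem_of_superset hO fun y hy => ⟨g y, hgP y hy⟩
  choose g hg hgP using fun i => exists_continuousOn_forall_mem_convex_of_local
    (U := {x | (P i x).Nonempty}) (fun x _ => hPconv i x) (hloc i)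
  choose f hfX hf using fun i => exists_continuous_eq_imp_eq_of_continuousOn (hopen i) (hconv i)
    (hcpt i).isBounded (continuous_subtype_val.comp (continuous_apply i)) (fun x => (x i).2)
    (hg i) (fun x hx => hPX i x (hgP i x hx))
  obtain ⟨x, hx⟩ := exists_fixedPoint_of_continuous_pi hcpt hconv hne
    (f := fun x i => ⟨f i x, hfX i x⟩) (continuous_pi fun i => (f i).continuous.subtype_mk _)
  refine ⟨x, fun i => not_nonempty_iff_eq_empty.1 fun hPx => hirr i x ?_⟩
  have hgx : g i x = x i := hf i x hPx (congrArg Subtype.val (congrFun hx i))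
  exact hgx ▸ hgP i x hPx

end QualitativeGame

section Bayesian

open Topology

theorem finiteDimensional_of_isCompact_of_interior_nonempty {E : Type*} [NormedAddCommGroup E]
    [NormedSpace ℝ E] {K : Set E} (hK : IsCompact K) (hint : (interior K).Nonempty) :
    FiniteDimensional ℝ E := by
  obtain ⟨y, hy⟩ := hint
  obtain ⟨δ, hδ, hball⟩ := Metric.nhds_basis_closedBall.mem_iff.1 (mem_interior_iff_mem_nhds.1 hy)
  exact .of_isCompact_closedBall ℝ hδ (hK.of_isClosed_subset Metric.isClosed_closedBall hball)

namespace CIPWitness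

variable {T Z Y : Type*} [MeasurableSpace T] [TopologicalSpace Z] [NormedAddCommGroup Y]
  [NormedSpace ℝ Y] {Ψ : T → Z → Set Y} {F : Z → T → Z → Set Y} {O : Z → T → Set Z} {t : T} {z : Z}

theorem exists_local_selection [PseudoMetrizableSpace Z] [FiniteDimensional ℝ Y]
    (hw : CIPWitness Ψ F O) (hconv : ∀ x, Convex ℝ (Ψ t x)) (hz : (Ψ t z).Nonempty) :
    ∃ U ∈ 𝓝 z, ∃ g : Z → Y, ContinuousOn g U ∧ ∀ x ∈ U, g x ∈ Ψ t x := by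
  obtain ⟨hO, hzO, hF⟩ := hw.1 z t hz
  obtain ⟨g, hg, hgF⟩ := (hw.2.1 z t hz).exists_continuousOn_selection
    (fun x hx => (hF x hx).1.convexHull) (fun x _ => convex_convexHull ℝ _)
  exact ⟨O z t, hO.mem_nhds hzO, g, hg,
    fun x hx => convexHull_min (hF x hx).2 (hconv x) (hgF x hx)⟩

theorem kmap_subset_interior (hw : CIPWitness Ψ F O) : Kmap Ψ F O t z ⊆ interior (Ψ t z) :=
  iUnion₂_subset fun w hw' => interior_mono ((hw.1 w t hw'.1).2.2 z hw'.2).2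

end CIPWitness

variable {Ω Y I : Type*} [DecidableEq I] {X : I → Set Y} {i : I}

section PrefCorr

variable {v : (i : I) → Ω → ((j : I) → X j) → ℝ} {ω : Ω} {x : (j : I) → X j}

theorem prefCorr_subset : PrefCorr X v i ω x ⊆ X i := fun _ hy => hy.1

theorem notMem_prefCorr : (x i : Y) ∉ PrefCorr X v i ω x := by
  rintro ⟨hy, hlt⟩
  rw [Subtype.coe_eta, Function.update_eq_self, sub_self] at hlt
  exact hlt.false

theorem prefCorr_eq_empty_iff :
    PrefCorr X v i ω x = ∅ ↔ ∀ y : X i, v i ω (Function.update x i y) ≤ v i ω x := by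
  simp only [PrefCorr, eq_empty_iff_forall_notMem, mem_ofPred_eq, not_exists, sub_pos, not_lt,
    Subtype.forall]

end PrefCorr

variable [NormedAddCommGroup Y] [NormedSpace ℝ Y]

/-- The payoff `v` of player `i`, as a function on strategy profiles, is concave in that player's
own strategy when the strategies of the others are kept fixed. -/
def OwnConcave (hX : ∀ j, Convex ℝ (X j)) (i : I) (v : ((j : I) → X j) → ℝ) : Prop :=
  ∀ (x : (j : I) → X j) (y₁ y₂ : X i) (a b : ℝ) (ha : 0 ≤ a) (hb : 0 ≤ b) (hab : a + b = 1),
    a * v (Function.update x i y₁) + b * v (Function.update x i y₂) ≤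
      v (Function.update x i ⟨a • (y₁ : Y) + b • (y₂ : Y), hX i y₁.2 y₂.2 ha hb hab⟩)

namespace OwnConcave

variable {hX : ∀ j, Convex ℝ (X j)}

theorem convex_setOf_lt {v : ((j : I) → X j) → ℝ} (hv : OwnConcave hX i v) (x : (j : I) → X j)
    (c : ℝ) : Convex ℝ {y | ∃ hy : y ∈ X i, c < v (Function.update x i ⟨y, hy⟩)} := by
  rintro y₁ ⟨hy₁, h₁⟩ y₂ ⟨hy₂, h₂⟩ a b ha hb hab
  exact ⟨hX i hy₁ hy₂ ha hb hab, ((convex_Ioi c) h₁ h₂ ha hb hab).trans_le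
    (hv x ⟨y₁, hy₁⟩ ⟨y₂, hy₂⟩ a b ha hb hab)⟩

theorem div_const {v : ((j : I) → X j) → ℝ} (hv : OwnConcave hX i v) {c : ℝ} (hc : 0 ≤ c) :
    OwnConcave hX i fun x => v x / c := by
  intro x y₁ y₂ a b ha hb hab
  calc a * (v (Function.update x i y₁) / c) + b * (v (Function.update x i y₂) / c)
      = (a * v (Function.update x i y₁) + b * v (Function.update x i y₂)) / c := by ring
    _ ≤ _ := div_le_div_of_nonneg_right (hv x y₁ y₂ a b ha hb hab) hc

theorem integral_mul {T : Type*} [MeasurableSpace T] {ν : Measure T} {w : T → ℝ}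
    {u : T → ((j : I) → X j) → ℝ} (hu : ∀ t, OwnConcave hX i (u t)) (hw : ∀ t, 0 ≤ w t)
    (hint : ∀ x, Integrable (fun t => w t * u t x) ν) :
    OwnConcave hX i fun x => ∫ t, w t * u t x ∂ν := by
  intro x y₁ y₂ a b ha hb hab
  rw [← integral_const_mul, ← integral_const_mul,
    ← integral_add ((hint _).const_mul a) ((hint _).const_mul b)]
  refine integral_mono (((hint _).const_mul a).add ((hint _).const_mul b)) (hint _) fun t => ?_
  calc a * (w t * u t (Function.update x i y₁)) + b * (w t * u t (Function.update x i y₂))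
      = w t * (a * u t (Function.update x i y₁) + b * u t (Function.update x i y₂)) := by ring
    _ ≤ _ := mul_le_mul_of_nonneg_left (hu t x y₁ y₂ a b ha hb hab) (hw t)

theorem convex_prefCorr {v : (i : I) → Ω → ((j : I) → X j) → ℝ} {ω : Ω}
    {x : (j : I) → X j} (hv : OwnConcave hX i (v i ω)) :
    Convex ℝ (PrefCorr X v i ω x) := by
  simpa only [PrefCorr, sub_pos] using hv.convex_setOf_lt x (v i ω x)

end OwnConcave

theorem exists_forall_prefCorr_eq_empty [MeasurableSpace Ω] [Countable I]
    (hXne : ∀ i, (X i).Nonempty) (hXcpt : ∀ i, IsCompact (X i)) (hX : ∀ i, Convex ℝ (X i))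
    {v : (i : I) → Ω → ((j : I) → X j) → ℝ} {ω : Ω} (hv : ∀ i, OwnConcave hX i (v i ω))
    {F : (i : I) → ((j : I) → X j) → Ω → ((j : I) → X j) → Set Y}
    {O : (i : I) → ((j : I) → X j) → Ω → Set ((j : I) → X j)}
    (hcip : ∀ i, CIPWitness (PrefCorr X v i) (F i) (O i))
    (hone : ∀ i, FiniteDimensional ℝ Y ∨ ∀ x, (PrefCorr X v i ω x).Nonempty →
      (Kmap (PrefCorr X v i) (F i) (O i) ω x).Nonempty) :
    ∃ x, ∀ i, PrefCorr X v i ω x = ∅ := by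
  by_cases hfin : FiniteDimensional ℝ Y
  · exact exists_forall_eq_empty_of_local_selections hXne hXcpt hX
      (P := fun i x => PrefCorr X v i ω x) (fun i x => prefCorr_subset)
      (fun i x => (hv i).convex_prefCorr) (fun i x => notMem_prefCorr)
      (fun i x => (hcip i).exists_local_selection fun x => (hv i).convex_prefCorr)
  · refine ⟨fun i => ⟨_, (hXne i).some_mem⟩, fun i => ?_⟩
    refine not_nonempty_iff_eq_empty.1 fun hP => hfin ?_
    exact finiteDimensional_of_isCompact_of_interior_nonempty (hXcpt i) <|
      ((hone i).resolve_left hfin _ hP).mono <|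
        (hcip i).kmap_subset_interior.trans (interior_mono prefCorr_subset)

theorem exists_measurable_forall_of_forall_cell {β ι : Type*} [MeasurableSpace Ω]
    [MeasurableSpace β] [Countable ι] [Nonempty ι] {A : ι → Set Ω} (hA : ∀ n, MeasurableSet (A n))
    (hdisj : Pairwise (Function.onFun Disjoint A)) (hcover : ⋃ n, A n = univ) {p : Ω → β → Prop}
    (hp : ∀ n, ∃ b, ∀ ω ∈ A n, p ω b) : ∃ f : Ω → β, Measurable f ∧ ∀ ω, p ω (f ω) := by
  choose c hc using hp
  obtain ⟨f, hf, hfc⟩ := exists_measurable_piecewise A hA (fun n _ => c n)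
    (fun n => measurable_const) fun m n hmn => by
      simp only [(hdisj hmn).inter_eq, eqOn_empty]
  refine ⟨f, hf, fun ω => ?_⟩
  obtain ⟨n, hn⟩ := mem_iUnion.1 (hcover.superset (mem_univ ω))
  rw [hfc n hn]
  exact hc n ω hn

theorem integrable_mul_of_norm_le_one [MeasurableSpace Ω] {μ : Measure Ω} {w f g : Ω → ℝ}
    (hw : AEStronglyMeasurable w μ) (hw1 : ∀ᵐ ω ∂μ, ‖w ω‖ ≤ 1) (hf : AEStronglyMeasurable f μ)
    (hg : Integrable g μ) (hfg : ∀ᵐ ω ∂μ, ‖f ω‖ ≤ g ω) : Integrable (fun ω => w ω * f ω) μ :=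
  (hg.mono' hf hfg).bdd_mul hw hw1

end Bayesian

theorem stmt_14_general {Ω Y I : Type*} [MeasurableSpace Ω] {μ : Measure Ω} [Countable I]
    [DecidableEq I] [NormedAddCommGroup Y] [NormedSpace ℝ Y] [MeasurableSpace Y]
    {A : ℕ → Set Ω} (hAmeas : ∀ n, MeasurableSet (A n))
    (hAdisj : Pairwise (Function.onFun Disjoint A)) (hAcover : ⋃ n, A n = Set.univ)
    {q : I → Ω → ℝ} (hq : ∀ i ω, 0 ≤ q i ω)
    (hcellpos : ∀ i n, ∀ ω ∈ A n, 0 < ∫ t in A n, q i t ∂μ)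
    {X : I → Set Y} (hXne : ∀ i, (X i).Nonempty) (hXcpt : ∀ i, IsCompact (X i))
    (hXconv : ∀ i, Convex ℝ (X i)) {u : (i : I) → Ω → ((j : I) → X j) → ℝ}
    (hint : ∀ i n x, IntegrableOn (fun t => q i t * u i t x) (A n) μ)
    {h : (i : I) → Ω → ((j : I) → X j) → ℝ}
    (hh : ∀ i ω x n, ω ∈ A n →
      h i ω x = (∫ t in A n, q i t * u i t x ∂μ) / (∫ t in A n, q i t ∂μ))
    (hconc : ∀ i ω, OwnConcave hXconv i (u i ω))
    {F : (i : I) → ((j : I) → X j) → Ω → ((j : I) → X j) → Set Y}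
    {O : (i : I) → ((j : I) → X j) → Ω → Set ((j : I) → X j)}
    (hcip : ∀ i, CIPWitness (PrefCorr X h i) (F i) (O i))
    (hone : ∀ i, FiniteDimensional ℝ Y ∨ ∀ ω x, (PrefCorr X h i ω x).Nonempty →
      (Kmap (PrefCorr X h i) (F i) (O i) ω x).Nonempty) :
    ∃ xs : Ω → (j : I) → X j, Measurable xs ∧
      ∀ i ω (y : X i), h i ω (Function.update (xs ω) i y) ≤ h i ω (xs ω) := by
  have hstate : ∀ ω, ∃ x, ∀ i, PrefCorr X h i ω x = ∅ := fun ω => by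
    obtain ⟨n, hn⟩ := mem_iUnion.1 (hAcover.superset (mem_univ ω))
    refine exists_forall_prefCorr_eq_empty hXne hXcpt hXconv (fun i => ?_) hcip
      fun i => (hone i).imp_right fun hK => hK ω
    rw [show h i ω = _ from funext fun x => hh i ω x n hn]
    exact (OwnConcave.integral_mul (hconc i) (hq i) (hint i n)).div_const (hcellpos i n ω hn).le
  have hcell : ∀ n, ∃ x, ∀ ω ∈ A n, ∀ i (y : X i), h i ω (Function.update x i y) ≤ h i ω x := by
    intro n
    obtain hn | ⟨ω₀, hω₀⟩ := (A n).eq_empty_or_nonempty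
    · exact ⟨fun i => ⟨_, (hXne i).some_mem⟩, by simp [hn]⟩
    · obtain ⟨x, hx⟩ := hstate ω₀
      refine ⟨x, fun ω hω i y => ?_⟩
      rw [hh i ω _ n hω, hh i ω _ n hω, ← hh i ω₀ _ n hω₀, ← hh i ω₀ _ n hω₀]
      exact prefCorr_eq_empty_iff.1 (hx i) y
  obtain ⟨xs, hxs, hbest⟩ := exists_measurable_forall_of_forall_cell hAmeas hAdisj hAcover hcell
  exact ⟨xs, hxs, fun i ω => hbest ω i⟩

/-- **Bayesian equilibrium existence (Theorem 6.9).**  Let `𝓖 = {(Xᵢ,uᵢ,𝓕ᵢ,qᵢ)}` be a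
Bayesian game with common information over a complete probability space whose σ-algebra is
generated by a countable measurable partition `A`, with positive priors integrating to one
and positive mass `∫_{E(ω)} qᵢ dμ` on cells, jointly measurable integrably bounded payoffs
`uᵢ`, and conditional expected utilities `hᵢ` given by
`hᵢ(ω,x) = ∫_{E(ω)} qᵢ uᵢ(·,x) dμ / ∫_{E(ω)} qᵢ dμ`.  If each `Xᵢ` is a nonempty compact
convex subset of a separable Banach space, `uᵢ` is concave in the own strategy, each
`Qᵢ^{uᵢ}` satisfies the (strong) continuous inclusion property, and either `Y` is
finite-dimensional or `𝕂(Qᵢ^{uᵢ}) ≠ ∅` on its domain, then `𝓖` has a Bayesian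
equilibrium. -/
theorem stmt_14 {Ω Y I : Type*} [mΩ : MeasurableSpace Ω] (μ : Measure Ω)
    [IsProbabilityMeasure μ] (hcomp : μ.IsComplete) [Countable I] [DecidableEq I]
    [NormedAddCommGroup Y] [NormedSpace ℝ Y] [CompleteSpace Y] [SeparableSpace Y]
    [MeasurableSpace Y] [BorelSpace Y]
    -- the common information partition
    (A : ℕ → Set Ω)
    (hAmeas : ∀ n, MeasurableSet (A n))
    (hAdisj : Pairwise (Function.onFun Disjoint A))
    (hAcover : ⋃ n, A n = Set.univ)
    (hgen : MeasurableSpace.generateFrom (Set.range A) = mΩ)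
    -- the priors
    (q : I → Ω → ℝ) (hqmeas : ∀ i, Measurable (q i))
    (hq01 : ∀ i ω, 0 < q i ω ∧ q i ω ≤ 1) (hqint : ∀ i, ∫ ω, q i ω ∂μ = 1)
    (hcellpos : ∀ i n, ∀ ω ∈ A n, 0 < ∫ t in A n, q i t ∂μ)
    -- (1) strategy sets
    (X : I → Set Y)
    (hXne : ∀ i, (X i).Nonempty) (hXcpt : ∀ i, IsCompact (X i))
    (hXconv : ∀ i, Convex ℝ (X i))
    -- the payoffs: jointly measurable and integrably bounded
    (u : (i : I) → Ω → ((j : I) → X j) → ℝ)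
    (humeas : ∀ i, Measurable (Function.uncurry (u i)))
    (hubdd : ∀ i, ∃ g : Ω → ℝ, Integrable g μ ∧ ∀ᵐ ω ∂μ, ∀ x, |u i ω x| ≤ g ω)
    -- the conditional expected utilities
    (h : (i : I) → Ω → ((j : I) → X j) → ℝ)
    (hh : ∀ i ω x n, ω ∈ A n →
      h i ω x = (∫ t in A n, q i t * u i t x ∂μ) / (∫ t in A n, q i t ∂μ))
    -- (2) concavity in the own strategy
    (hconc : ∀ i ω (x : (j : I) → X j) (y₁ y₂ : X i) (a b : ℝ) (ha : 0 ≤ a) (hb : 0 ≤ b)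
      (hab : a + b = 1),
      a * u i ω (Function.update x i y₁) + b * u i ω (Function.update x i y₂) ≤
        u i ω (Function.update x i
          ⟨a • (y₁ : Y) + b • (y₂ : Y), hXconv i y₁.2 y₂.2 ha hb hab⟩))
    -- (3)
    (F : (i : I) → ((j : I) → X j) → Ω → ((j : I) → X j) → Set Y)
    (O : (i : I) → ((j : I) → X j) → Ω → Set ((j : I) → X j))
    (hcipa : IsAtomicMeasure μ → ∀ i, CIPWitness (PrefCorr X h i) (F i) (O i))
    (hcipn : ¬IsAtomicMeasure μ → ∀ i, SCIPWitness (PrefCorr X h i) (F i) (O i))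
    -- (4)
    (hone : ∀ i, FiniteDimensional ℝ Y ∨ ∀ ω x, (PrefCorr X h i ω x).Nonempty →
      (Kmap (PrefCorr X h i) (F i) (O i) ω x).Nonempty) :
    ∃ xs : Ω → (j : I) → X j, Measurable xs ∧
      ∀ i, ∀ᵐ ω ∂μ, ∀ y : X i, h i ω (Function.update (xs ω) i y) ≤ h i ω (xs ω) := by
  have hint : ∀ i x, Integrable (fun t => q i t * u i t x) μ := fun i x => by
    obtain ⟨g, hg, hug⟩ := hubdd i
    exact integrable_mul_of_norm_le_one (hqmeas i).aestronglyMeasurable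
      (.of_forall fun ω => (Real.norm_of_nonneg (hq01 i ω).1.le).trans_le (hq01 i ω).2)
      (humeas i).of_uncurry_right.aestronglyMeasurable hg (hug.mono fun ω hω => hω x)
  obtain ⟨xs, hxs, hbest⟩ := stmt_14_general hAmeas hAdisj hAcover (fun i ω => (hq01 i ω).1.le)
    hcellpos hXne hXcpt hXconv (fun i n x => (hint i x).integrableOn) hh hconc
    (fun i => (em (IsAtomicMeasure μ)).elim (hcipa · i) fun hμ => (hcipn hμ i).1) hone
  exact ⟨xs, hxs, fun i => .of_forall (hbest i)⟩
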